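/- arXiv:1902.00368 — 2 statements merged into one kernel-verified Lean document; each statement's English description precedes it below -/
import Mathlib

section
/- Let b ∈ (0,1), c, τ > 0, and let φ : ℝ → ℝ be a nondecreasing, non-constant, bounded, twice continuously differentiable solution of the profile equation φ''(t) − c·φ'(t) + (Bφ)(t)·(1 − (1−b)·(SBφ)(t)) = 0 with φ(−∞) = 0 and φ(+∞) = 1. Then: (i) φ'(t) > 0 for all t ∈ ℝ; (ii) the characteristic function χ₀ has positive real zeros λ₂ ≤ λ₁; and (iii) there exist ε > 0, t_a ∈ ℝ, d ∈ ℝ such that, as t → −∞: if λ₂ < λ₁ then φ(t + t_a) = e^{λ₂·t}·(1 + o(e^{ε·t})), while if λ₂ = λ₁ then φ(t + t_a) = e^{λ₂·t}·(−t + d + o(e^{ε·t})). -/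
open Filter Asymptotics

/-- Characteristic function χ₀(z) = z² − c·z + 1/(1 − b·e^{−z·c·τ}). -/
noncomputable def chi0 (b c τ z : ℝ) : ℝ :=
  z ^ 2 - c * z + 1 / (1 - b * Real.exp (-(z * c * τ)))

/-- `(Bφ)(t) = Σ_{j≥0} b^j φ(t − j·c·τ)`. -/
noncomputable def Bop (b c τ : ℝ) (φ : ℝ → ℝ) (t : ℝ) : ℝ :=
  ∑' j : ℕ, b ^ j * φ (t - (j : ℝ) * c * τ)

/-- `(SBφ)(t) = Σ_{j≥0} b^j φ(t − (j+1)·c·τ)`. -/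
noncomputable def SBop (b c τ : ℝ) (φ : ℝ → ℝ) (t : ℝ) : ℝ :=
  ∑' j : ℕ, b ^ j * φ (t - ((j : ℝ) + 1) * c * τ)

open MeasureTheory Set Topology

/-!
The bilateral Laplace transform turns the profile equation into `χ₀ · ℒφ = ℒ(nonlin φ)`, where the
nonlinearity is quadratic and hence decays at `-∞` at twice the rate `λ` of `φ`. By Landau's theorem
the transform of the nonnegative function `φ` is singular at the real point `λ` of its line of
convergence; as `ℒ(nonlin φ)` is holomorphic and positive there, `λ` is the smallest positive zero
of `χ₀`. Convexity of `χ₀(x) - x²` bounds its order by two, and a modulus comparison shows that it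
is the only zero on the line `re z = λ`. Moving the inversion contour slightly past that line picks
up the residue at `λ`, which is the leading term of `φ`, with an exponentially smaller remainder.
-/

/-! ### Exponential bounds -/

lemma hasDerivAt_exp_neg_mul (k t : ℝ) :
    HasDerivAt (fun t => Real.exp (-(k * t))) (Real.exp (-(k * t)) * -k) t :=
  HasDerivAt.exp (by simpa using ((hasDerivAt_id' t).const_mul k).fun_neg)

lemma antitoneOn_mul_exp_neg_of_deriv_le {D : Set ℝ} (hD : Convex ℝ D) {f f' : ℝ → ℝ} {k : ℝ}
    (hf : ∀ t ∈ D, HasDerivAt f (f' t) t) (hf' : ∀ t ∈ D, f' t ≤ k * f t) :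
    AntitoneOn (fun t => f t * Real.exp (-(k * t))) D := by
  have hd (t : ℝ) (ht : t ∈ D) : HasDerivAt (fun t => f t * Real.exp (-(k * t)))
      ((f' t - k * f t) * Real.exp (-(k * t))) t :=
    ((hf t ht).mul (hasDerivAt_exp_neg_mul k t)).congr_deriv (by ring)
  refine antitoneOn_of_hasDerivWithinAt_nonpos hD
    (fun t ht => (hd t ht).continuousAt.continuousWithinAt)
    (fun t ht => (hd t (interior_subset ht)).hasDerivWithinAt) fun t ht => ?_
  exact mul_nonpos_of_nonpos_of_nonneg (sub_nonpos.2 (hf' t (interior_subset ht)))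
    (Real.exp_pos _).le

lemma monotoneOn_mul_exp_neg_of_le_deriv {D : Set ℝ} (hD : Convex ℝ D) {f f' : ℝ → ℝ} {k : ℝ}
    (hf : ∀ t ∈ D, HasDerivAt f (f' t) t) (hf' : ∀ t ∈ D, k * f t ≤ f' t) :
    MonotoneOn (fun t => f t * Real.exp (-(k * t))) D := by
  have h := antitoneOn_mul_exp_neg_of_deriv_le hD (k := k) (fun t ht => (hf t ht).neg)
    fun t ht => by simpa using hf' t ht
  simpa using h.neg

/-! ### Landau's theorem -/

lemma integrable_of_hasSum_of_nonneg {Ω : Type*} {m : MeasurableSpace Ω} {μ : Measure Ω}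
    {F : ℕ → Ω → ℝ} {s : Ω → ℝ} (hF₀ : ∀ n ω, 0 ≤ F n ω) (hF : ∀ n, Integrable (F n) μ)
    (hsum : Summable fun n => ∫ ω, F n ω ∂μ) (hs : ∀ ω, HasSum (fun n => F n ω) (s ω)) :
    Integrable s μ := by
  have hs₀ (ω : Ω) : 0 ≤ s ω := (hs ω).nonneg fun n => hF₀ n ω
  refine ⟨aestronglyMeasurable_of_tendsto_ae (atTop : Filter (Finset ℕ))
    (f := fun A ω => ∑ n ∈ A, F n ω)
    (fun A => Finset.aestronglyMeasurable_fun_sum A fun n _ => (hF n).1) (ae_of_all _ hs), ?_⟩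
  rw [hasFiniteIntegral_iff_ofReal (ae_of_all _ hs₀)]
  calc ∫⁻ ω, ENNReal.ofReal (s ω) ∂μ = ∫⁻ ω, ∑' n, ENNReal.ofReal (F n ω) ∂μ :=
        lintegral_congr fun ω => by
          rw [← (hs ω).tsum_eq, ENNReal.ofReal_tsum_of_nonneg (fun n => hF₀ n ω) (hs ω).summable]
    _ = ∑' n, ENNReal.ofReal (∫ ω, F n ω ∂μ) := by
        rw [lintegral_tsum fun n => (hF n).1.aemeasurable.ennreal_ofReal]
        exact tsum_congr fun n =>
          (ofReal_integral_eq_lintegral_ofReal (hF n) (ae_of_all _ (hF₀ n))).symm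
    _ = ENNReal.ofReal (∑' n, ∫ ω, F n ω ∂μ) :=
        (ENNReal.ofReal_tsum_of_nonneg (fun n => integral_nonneg (hF₀ n)) hsum).symm
    _ < ⊤ := ENNReal.ofReal_lt_top

open ProbabilityTheory in
lemma summable_integral_pow_mul_exp {Ω : Type*} {m : MeasurableSpace Ω} {μ : Measure Ω}
    {X : Ω → ℝ} {x r w : ℝ} (hx : x ∈ interior (integrableExpSet X μ)) {G : ℂ → ℂ}
    (hG : DifferentiableOn ℂ G (Metric.ball (x : ℂ) r)) (hGX : G =ᶠ[𝓝 (x : ℂ)] complexMGF X μ)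
    (hw : |w| < r) :
    Summable fun n : ℕ => w ^ n / n.factorial * ∫ ω, X ω ^ n * Real.exp (x * X ω) ∂μ := by
  have hcoeff (n : ℕ) : iteratedDeriv n G (x : ℂ)
      = ((∫ ω, X ω ^ n * Real.exp (x * X ω) ∂μ : ℝ) : ℂ) := by
    rw [hGX.iteratedDeriv_eq n, iteratedDeriv_complexMGF (by simpa using hx),
      ← integral_complex_ofReal]
    push_cast
    rfl
  have hmem : ((x + w : ℝ) : ℂ) ∈ Metric.ball (x : ℂ) r := by
    simpa [Metric.mem_ball, dist_eq_norm] using hw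
  rw [← Complex.summable_ofReal]
  refine (Complex.hasSum_taylorSeries_on_ball hG hmem).summable.congr fun n => ?_
  rw [hcoeff]
  push_cast
  simp only [smul_eq_mul, add_sub_cancel_left]
  ring

open ProbabilityTheory in
/-- Only the even moments enter, through the series of `cosh (w X)`: they are nonnegative whatever
the sign of `X`, so the Taylor series of `G` at `x` may be integrated term by term. -/
lemma add_mem_integrableExpSet_of_differentiableOn_ball {Ω : Type*} {m : MeasurableSpace Ω}
    {μ : Measure Ω} {X : Ω → ℝ} {x r w : ℝ} (hx : x ∈ interior (integrableExpSet X μ)) {G : ℂ → ℂ}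
    (hG : DifferentiableOn ℂ G (Metric.ball (x : ℂ) r)) (hGX : G =ᶠ[𝓝 (x : ℂ)] complexMGF X μ)
    (hw : |w| < r) : x + w ∈ integrableExpSet X μ := by
  have hX : AEMeasurable X μ := aemeasurable_of_mem_interior_integrableExpSet hx
  have hterm (n : ℕ) (ω : Ω) : 0 ≤ w ^ (2 * n) / (2 * n).factorial *
      (X ω ^ (2 * n) * Real.exp (x * X ω)) := by
    have := (even_two_mul n).pow_nonneg w
    have := (even_two_mul n).pow_nonneg (X ω)
    positivity
  have hcosh : Integrable (fun ω => Real.cosh (w * X ω) * Real.exp (x * X ω)) μ := by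
    refine integrable_of_hasSum_of_nonneg hterm
      (fun n => (integrable_pow_mul_exp_of_mem_interior_integrableExpSet hx _).const_mul _) ?_
      fun ω => ?_
    · simp_rw [integral_const_mul]
      exact (summable_integral_pow_mul_exp hx hG hGX hw).comp_injective
        (mul_right_injective₀ two_ne_zero)
    · refine ((Real.hasSum_cosh (w * X ω)).mul_right (Real.exp (x * X ω))).congr_fun fun n => ?_
      ring
  refine (hcosh.const_mul 2).mono' (by fun_prop) (ae_of_all _ fun ω => ?_)
  rw [Real.norm_of_nonneg (Real.exp_pos _).le, Real.cosh_eq, add_mul x, add_comm, Real.exp_add]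
  nlinarith [Real.exp_pos (x * X ω), Real.exp_pos (-(w * X ω))]

/-! ### The two-sided Laplace transform -/

/-- The two-sided Laplace transform of a function on the line. -/
noncomputable def laplace (f : ℝ → ℂ) (z : ℂ) : ℂ := ∫ t : ℝ, f t * Complex.exp (-(z * t))

/-- Absolute convergence at `z` of the integral defining `laplace f z`. -/
def LaplaceConvergent (f : ℝ → ℂ) (z : ℂ) : Prop :=
  Integrable fun t : ℝ => f t * Complex.exp (-(z * t))

section Laplace

variable {f g : ℝ → ℂ} {z : ℂ}

lemma norm_mul_cexp_neg (a z : ℂ) (t : ℝ) :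
    ‖a * Complex.exp (-(z * t))‖ = ‖a‖ * Real.exp (-(z.re * t)) := by
  rw [norm_mul, Complex.norm_exp]
  simp

lemma LaplaceConvergent.add (hf : LaplaceConvergent f z) (hg : LaplaceConvergent g z) :
    LaplaceConvergent (fun t => f t + g t) z :=
  (Integrable.add hf hg).congr (ae_of_all _ fun _ => (add_mul _ _ _).symm)

lemma LaplaceConvergent.sub (hf : LaplaceConvergent f z) (hg : LaplaceConvergent g z) :
    LaplaceConvergent (fun t => f t - g t) z :=
  (Integrable.sub hf hg).congr (ae_of_all _ fun _ => (sub_mul _ _ _).symm)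

lemma LaplaceConvergent.const_mul (a : ℂ) (hf : LaplaceConvergent f z) :
    LaplaceConvergent (fun t => a * f t) z :=
  (Integrable.const_mul hf a).congr (ae_of_all _ fun _ => (mul_assoc _ _ _).symm)

lemma laplace_add (hf : LaplaceConvergent f z) (hg : LaplaceConvergent g z) :
    laplace (fun t => f t + g t) z = laplace f z + laplace g z := by
  simp only [laplace, add_mul]
  exact integral_add hf hg

lemma laplace_sub (hf : LaplaceConvergent f z) (hg : LaplaceConvergent g z) :
    laplace (fun t => f t - g t) z = laplace f z - laplace g z := by
  simp only [laplace, sub_mul]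
  exact integral_sub hf hg

lemma laplace_const_mul (a : ℂ) : laplace (fun t => a * f t) z = a * laplace f z := by
  simp only [laplace, mul_assoc, integral_const_mul]

lemma comp_sub_right_mul_cexp (f : ℝ → ℂ) (s : ℝ) (z : ℂ) (t : ℝ) :
    f (t - s) * Complex.exp (-(z * t))
      = Complex.exp (-(z * s)) * (f (t - s) * Complex.exp (-(z * (t - s : ℝ)))) := by
  rw [mul_left_comm, ← Complex.exp_add]
  push_cast
  ring_nf

lemma LaplaceConvergent.comp_sub_right (hf : LaplaceConvergent f z) (s : ℝ) :
    LaplaceConvergent (fun t => f (t - s)) z := by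
  simp only [LaplaceConvergent, comp_sub_right_mul_cexp f s z]
  exact (Integrable.comp_sub_right hf s).const_mul _

lemma laplace_comp_sub_right (f : ℝ → ℂ) (s : ℝ) (z : ℂ) :
    laplace (fun t => f (t - s)) z = Complex.exp (-(z * s)) * laplace f z := by
  simp only [laplace, comp_sub_right_mul_cexp f s z, integral_const_mul]
  rw [integral_sub_right_eq_self (fun t : ℝ => f t * Complex.exp (-(z * t))) s]

lemma laplace_deriv {f' : ℝ → ℂ} (hd : ∀ t, HasDerivAt f (f' t) t) (hf : LaplaceConvergent f z)
    (hf' : LaplaceConvergent f' z) : laplace f' z = z * laplace f z := by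
  have hexp (t : ℝ) : HasDerivAt (fun t : ℝ => Complex.exp (-(z * t)))
      (Complex.exp (-(z * t)) * -z) t :=
    HasDerivAt.cexp (by simpa using ((hasDerivAt_id' t).ofReal_comp.const_mul z).fun_neg)
  have h := integral_eq_zero_of_hasDerivAt_of_integrable
    (f' := fun t : ℝ => f' t * Complex.exp (-(z * t)) - z * (f t * Complex.exp (-(z * t))))
    (fun t => ((hd t).mul (hexp t)).congr_deriv (by ring))
    (Integrable.sub hf' (Integrable.const_mul hf z)) hf
  rw [integral_sub hf' (Integrable.const_mul hf z), integral_const_mul] at h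
  exact sub_eq_zero.1 h

lemma LaplaceConvergent.of_norm_le {σ C M : ℝ} (hf : AEStronglyMeasurable f)
    (hC : ∀ t, ‖f t‖ ≤ C * Real.exp (σ * t)) (hM : ∀ t, ‖f t‖ ≤ M) (h₀ : 0 < z.re)
    (hσ : z.re < σ) : LaplaceConvergent f z := by
  have hm : AEStronglyMeasurable fun t : ℝ => f t * Complex.exp (-(z * t)) :=
    hf.mul (by fun_prop)
  rw [LaplaceConvergent, ← integrableOn_univ, ← Iic_union_Ioi (a := (0 : ℝ)), integrableOn_union]
  constructor
  · refine ((integrableOn_exp_mul_Iic (sub_pos.2 hσ) 0).const_mul C).mono' hm.restrict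
      (ae_of_all _ fun t => ?_)
    rw [norm_mul_cexp_neg, sub_mul, sub_eq_add_neg, Real.exp_add, ← mul_assoc]
    exact mul_le_mul_of_nonneg_right (hC t) (Real.exp_pos _).le
  · refine ((integrableOn_exp_mul_Ioi (neg_lt_zero.2 h₀) 0).const_mul M).mono' hm.restrict
      (ae_of_all _ fun t => ?_)
    rw [norm_mul_cexp_neg, neg_mul]
    exact mul_le_mul_of_nonneg_right (hM t) (Real.exp_pos _).le

lemma exp_neg_mul_le_add {x y s : ℝ} (hs : s ∈ Icc x y) (t : ℝ) :
    Real.exp (-(s * t)) ≤ Real.exp (-(x * t)) + Real.exp (-(y * t)) := by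
  have hx := Real.exp_pos (-(x * t))
  have hy := Real.exp_pos (-(y * t))
  rcases le_total 0 t with ht | ht
  · have := Real.exp_le_exp.2 (neg_le_neg (mul_le_mul_of_nonneg_right hs.1 ht))
    linarith
  · have := Real.exp_le_exp.2 (neg_le_neg (mul_le_mul_of_nonpos_right hs.2 ht))
    linarith

lemma norm_laplace_le_add {x y : ℝ} (hx : LaplaceConvergent f x) (hy : LaplaceConvergent f y)
    (hz : z.re ∈ Icc x y) :
    ‖laplace f z‖ ≤ (∫ t, ‖f t‖ * Real.exp (-(x * t))) + ∫ t, ‖f t‖ * Real.exp (-(y * t)) := by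
  have hint {s : ℝ} (hs : LaplaceConvergent f s) :
      Integrable fun t => ‖f t‖ * Real.exp (-(s * t)) := by
    simpa only [norm_mul_cexp_neg, Complex.ofReal_re] using Integrable.norm hs
  rw [← integral_add (hint hx) (hint hy)]
  refine norm_integral_le_of_norm_le ((hint hx).add (hint hy)) (ae_of_all _ fun t => ?_)
  rw [norm_mul_cexp_neg, ← mul_add]
  exact mul_le_mul_of_nonneg_left (exp_neg_mul_le_add hz t) (norm_nonneg _)

end Laplace

section LaplaceNonneg

open ProbabilityTheory

variable {f : ℝ → ℝ}

lemma laplace_ofReal (f : ℝ → ℝ) (x : ℝ) :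
    laplace (fun t => (f t : ℂ)) x = ((∫ t, f t * Real.exp (-(x * t)) : ℝ) : ℂ) := by
  rw [laplace, ← integral_complex_ofReal]
  push_cast
  rfl

lemma laplaceConvergent_ofReal_iff {x : ℝ} :
    LaplaceConvergent (fun t => (f t : ℂ)) x ↔ Integrable fun t => f t * Real.exp (-(x * t)) := by
  have hcoe (t : ℝ) : (f t : ℂ) * Complex.exp (-(x * t))
      = ((f t * Real.exp (-(x * t)) : ℝ) : ℂ) := by push_cast; rfl
  simp only [LaplaceConvergent, hcoe]
  exact ⟨fun h => by simpa only [RCLike.re_eq_complex_re, Complex.ofReal_re] using h.re,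
    fun h => h.ofReal⟩

lemma laplace_eq_complexMGF (hf : Measurable f) (hf₀ : 0 ≤ f) (z : ℂ) :
    laplace (fun t => (f t : ℂ)) z
      = complexMGF (fun t => -t) (volume.withDensity fun t => ENNReal.ofReal (f t)) z := by
  rw [complexMGF, integral_withDensity_eq_integral_toReal_smul (by fun_prop)
    (ae_of_all _ fun t => ENNReal.ofReal_lt_top), laplace]
  congr 1 with t
  simp [ENNReal.toReal_ofReal (hf₀ t)]

lemma mem_integrableExpSet_withDensity_iff (hf : Measurable f) (hf₀ : 0 ≤ f) {x : ℝ} :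
    x ∈ integrableExpSet (fun t => -t) (volume.withDensity fun t => ENNReal.ofReal (f t)) ↔
      LaplaceConvergent (fun t => (f t : ℂ)) x := by
  rw [integrableExpSet, mem_ofPred_eq, integrable_withDensity_iff_integrable_smul' (by fun_prop)
    (ae_of_all _ fun t => ENNReal.ofReal_lt_top), laplaceConvergent_ofReal_iff]
  simp [ENNReal.toReal_ofReal (hf₀ _)]

lemma mem_interior_integrableExpSet_withDensity (hf : Measurable f) (hf₀ : 0 ≤ f) {x : ℝ}
    (hx : ∀ᶠ y : ℝ in 𝓝 x, LaplaceConvergent (fun t => (f t : ℂ)) y) :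
    x ∈ interior (integrableExpSet (fun t => -t)
      (volume.withDensity fun t => ENNReal.ofReal (f t))) := by
  rw [mem_interior_iff_mem_nhds]
  filter_upwards [hx] with y hy using (mem_integrableExpSet_withDensity_iff hf hf₀).2 hy

lemma differentiableAt_laplace (hf : Measurable f) (hf₀ : 0 ≤ f) {z : ℂ}
    (hz : ∀ᶠ x : ℝ in 𝓝 z.re, LaplaceConvergent (fun t => (f t : ℂ)) x) :
    DifferentiableAt ℂ (laplace fun t => (f t : ℂ)) z := by
  rw [funext (laplace_eq_complexMGF hf hf₀)]
  exact (hasDerivAt_complexMGF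
    (mem_interior_integrableExpSet_withDensity hf hf₀ hz)).differentiableAt

lemma LaplaceConvergent.add_of_differentiableOn_ball (hf : Measurable f) (hf₀ : 0 ≤ f) {x r w : ℝ}
    (hx : ∀ᶠ y : ℝ in 𝓝 x, LaplaceConvergent (fun t => (f t : ℂ)) y) {G : ℂ → ℂ}
    (hG : DifferentiableOn ℂ G (Metric.ball (x : ℂ) r))
    (hGf : G =ᶠ[𝓝 (x : ℂ)] laplace fun t => (f t : ℂ)) (hw : |w| < r) :
    LaplaceConvergent (fun t => (f t : ℂ)) ((x + w : ℝ) : ℂ) := by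
  rw [← mem_integrableExpSet_withDensity_iff hf hf₀]
  exact add_mem_integrableExpSet_of_differentiableOn_ball
    (mem_interior_integrableExpSet_withDensity hf hf₀ hx) hG
    (hGf.trans (Eventually.of_forall (laplace_eq_complexMGF hf hf₀))) hw

end LaplaceNonneg

/-! ### Inversion and shift of the line of integration -/

section Vertical

lemma integrable_vertical {F : ℂ → ℂ} {a M : ℝ} {S : Set ℝ} (ha : a ∈ S)
    (hF : ContinuousOn F {z | z.re ∈ S}) (hM : ∀ z : ℂ, z.re ∈ S → ‖F z‖ ≤ M / (1 + z.im ^ 2)) :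
    Integrable fun y : ℝ => F (a + y * Complex.I) := by
  refine (integrable_inv_one_add_sq.const_mul M).mono' ?_ (ae_of_all _ fun y => ?_)
  · exact (hF.comp_continuous (by fun_prop) fun y => by simpa using ha).aestronglyMeasurable
  · simpa [div_eq_mul_inv] using hM (a + y * Complex.I) (by simpa using ha)

variable {F : ℂ → ℂ} {a b M : ℝ}

lemma tendsto_integral_horizontal (hab : a ≤ b)
    (hM : ∀ z : ℂ, z.re ∈ Icc a b → ‖F z‖ ≤ M / (1 + z.im ^ 2)) {ι : Type*} {l : Filter ι}
    {u : ι → ℝ} (hu : Tendsto (fun i => u i ^ 2) l atTop) :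
    Tendsto (fun i => ∫ x : ℝ in a..b, F (x + u i * Complex.I)) l (𝓝 0) := by
  have hlim : Tendsto (fun i => M / (1 + u i ^ 2) * |b - a|) l (𝓝 0) := by
    simpa using ((tendsto_atTop_add_const_left _ 1 hu).const_div_atTop M).mul_const |b - a|
  refine squeeze_zero_norm (fun i => ?_) hlim
  refine intervalIntegral.norm_integral_le_of_norm_le_const fun x hx => ?_
  rw [uIoc_of_le hab] at hx
  simpa using hM (x + u i * Complex.I) (by simpa using ⟨hx.1.le, hx.2⟩)

lemma integral_vertical_eq (hab : a ≤ b) (hF : DifferentiableOn ℂ F {z | z.re ∈ Icc a b})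
    (hM : ∀ z : ℂ, z.re ∈ Icc a b → ‖F z‖ ≤ M / (1 + z.im ^ 2)) :
    ∫ y : ℝ, F (a + y * Complex.I) = ∫ y : ℝ, F (b + y * Complex.I) := by
  have hver (s : ℝ) (hs : s ∈ Icc a b) :
      Tendsto (fun T : ℝ => ∫ y : ℝ in (-T)..T, F (s + y * Complex.I)) atTop
        (𝓝 (∫ y : ℝ, F (s + y * Complex.I))) :=
    intervalIntegral_tendsto_integral (integrable_vertical hs hF.continuousOn hM)
      tendsto_neg_atTop_atBot tendsto_id
  have htop := tendsto_integral_horizontal hab hM (tendsto_pow_atTop two_ne_zero)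
  have hbot : Tendsto (fun T : ℝ => ∫ x : ℝ in a..b, F (x + (-T : ℝ) * Complex.I)) atTop (𝓝 0) :=
    tendsto_integral_horizontal hab hM
      (by simpa only [neg_sq] using tendsto_pow_atTop two_ne_zero)
  have hrect (T : ℝ) : (∫ x : ℝ in a..b, F (x + (-T : ℝ) * Complex.I))
      - (∫ x : ℝ in a..b, F (x + T * Complex.I))
      + Complex.I • (∫ y : ℝ in (-T)..T, F (b + y * Complex.I))
      - Complex.I • (∫ y : ℝ in (-T)..T, F (a + y * Complex.I)) = 0 := by
    have := Complex.integral_boundary_rect_eq_zero_of_differentiableOn F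
      (a + (-T : ℝ) * Complex.I) (b + T * Complex.I)
      (hF.mono fun z hz => by simpa [uIcc_of_le hab] using hz.1)
    simpa using this
  have hlim := ((hbot.sub htop).add ((hver b ⟨hab, le_rfl⟩).const_smul Complex.I)).sub
    ((hver a ⟨le_rfl, hab⟩).const_smul Complex.I)
  have h₀ := tendsto_nhds_unique (tendsto_const_nhds.congr fun T => (hrect T).symm) hlim
  simp only [sub_zero, zero_add, smul_eq_mul, ← mul_sub] at h₀
  exact (sub_eq_zero.1 ((mul_eq_zero.1 h₀.symm).resolve_left Complex.I_ne_zero)).symm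

lemma integral_vertical_mul_cexp_eq (hab : a ≤ b)
    (hF : DifferentiableOn ℂ F {z | z.re ∈ Icc a b})
    (hM : ∀ z : ℂ, z.re ∈ Icc a b → ‖F z‖ ≤ M / (1 + z.im ^ 2)) (t : ℝ) :
    ∫ y : ℝ, F (a + y * Complex.I) * Complex.exp ((a + y * Complex.I) * t)
      = ∫ y : ℝ, F (b + y * Complex.I) * Complex.exp ((b + y * Complex.I) * t) := by
  refine integral_vertical_eq (F := fun z => F z * Complex.exp (z * t))
    (M := M * (Real.exp (a * t) + Real.exp (b * t))) hab (hF.mul (by fun_prop)) fun z hz => ?_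
  rw [norm_mul, Complex.norm_exp, mul_div_right_comm]
  refine mul_le_mul (hM z hz) ?_ (Real.exp_pos _).le ((norm_nonneg _).trans (hM z hz))
  simpa using exp_neg_mul_le_add hz (-t)

lemma norm_integral_vertical_mul_cexp_le
    (hM : ∀ y : ℝ, ‖F (b + y * Complex.I)‖ ≤ M / (1 + y ^ 2)) (t : ℝ) :
    ‖∫ y : ℝ, F (b + y * Complex.I) * Complex.exp ((b + y * Complex.I) * t)‖
      ≤ (∫ y : ℝ, M * (1 + y ^ 2)⁻¹) * Real.exp (b * t) := by
  rw [← integral_mul_const]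
  refine norm_integral_le_of_norm_le ((integrable_inv_one_add_sq.const_mul M).mul_const _)
    (ae_of_all _ fun y => ?_)
  rw [norm_mul, Complex.norm_exp, ← div_eq_mul_inv]
  simpa using mul_le_mul_of_nonneg_right (hM y) (Real.exp_pos (b * t)).le

end Vertical

section Inversion

open scoped FourierTransform

lemma fourier_mul_cexp_neg (f : ℝ → ℂ) (a w : ℝ) :
    𝓕 (fun t : ℝ => f t * Complex.exp (-(a * t))) w
      = laplace f (a + (2 * Real.pi * w : ℝ) * Complex.I) := by
  rw [Real.fourier_eq', laplace]
  congr 1 with t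
  simp only [smul_eq_mul, RCLike.inner_apply, conj_trivial]
  rw [mul_left_comm, ← Complex.exp_add]
  congr 2
  push_cast
  ring

/-- The Fourier inversion formula, along the line `re z = a`. -/
lemma two_pi_mul_eq_integral_laplace {f : ℝ → ℂ} (hf : Continuous f) {a : ℝ}
    (hfa : LaplaceConvergent f a) (hint : Integrable fun y : ℝ => laplace f (a + y * Complex.I))
    (t : ℝ) : 2 * Real.pi * f t
      = ∫ y : ℝ, laplace f (a + y * Complex.I) * Complex.exp ((a + y * Complex.I) * t) := by
  have hinv : 𝓕⁻ (𝓕 fun t : ℝ => f t * Complex.exp (-(a * t))) t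
      = f t * Complex.exp (-(a * t)) := by
    refine Integrable.fourierInv_fourier_eq hfa ?_ (by fun_prop)
    simp_rw [funext (fourier_mul_cexp_neg f a)]
    exact hint.comp_mul_left' (by positivity)
  have hscale := Measure.integral_comp_mul_left (fun y : ℝ => laplace f (a + y * Complex.I) *
    Complex.exp ((a + y * Complex.I) * t)) (2 * Real.pi)
  rw [abs_of_pos (by positivity), eq_inv_smul_iff₀ (by positivity), Complex.real_smul] at hscale
  rw [← hscale, ← mul_one (f t), ← Complex.exp_zero, ← neg_add_cancel ((a : ℂ) * t),
    Complex.exp_add, ← mul_assoc (f t), ← hinv, Real.fourierInv_eq', ← integral_mul_const]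
  push_cast
  congr 2 with w
  rw [fourier_mul_cexp_neg, smul_eq_mul, mul_comm (Complex.exp _), mul_assoc, ← Complex.exp_add]
  simp only [RCLike.inner_apply, conj_trivial]
  push_cast
  ring_nf

/-- The inversion integral is moved from `re z = a` to `re z = b`. -/
lemma exists_norm_le_exp_of_laplace_eq {f : ℝ → ℂ} (hf : Continuous f) {F : ℂ → ℂ} {a b M : ℝ}
    (hab : a ≤ b) (hfa : LaplaceConvergent f a) (hfF : ∀ z : ℂ, z.re = a → laplace f z = F z)
    (hF : DifferentiableOn ℂ F {z | z.re ∈ Icc a b})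
    (hM : ∀ z : ℂ, z.re ∈ Icc a b → ‖F z‖ ≤ M / (1 + z.im ^ 2)) :
    ∃ C, ∀ t, ‖f t‖ ≤ C * Real.exp (b * t) := by
  have hline (y : ℝ) : laplace f (a + y * Complex.I) = F (a + y * Complex.I) := hfF _ (by simp)
  have hint := integrable_vertical (left_mem_Icc.2 hab) hF.continuousOn hM
  refine ⟨(2 * Real.pi)⁻¹ * ∫ y : ℝ, M * (1 + y ^ 2)⁻¹, fun t => ?_⟩
  have hinv := two_pi_mul_eq_integral_laplace hf hfa (by simpa only [hline] using hint) t
  simp only [hline] at hinv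
  have hle := norm_integral_vertical_mul_cexp_le (F := F) (M := M) (b := b)
    (fun y => by simpa using hM (b + y * Complex.I) (by simpa using hab)) t
  rw [← integral_vertical_mul_cexp_eq hab hF hM t, ← hinv, norm_mul, norm_mul,
    Complex.norm_real, Real.norm_of_nonneg Real.pi_pos.le, Complex.norm_two] at hle
  rw [mul_assoc, inv_mul_eq_div, le_div_iff₀' (by positivity)]
  exact hle

end Inversion

/-! ### The expansion at `-∞` carried by a double pole -/

section MulExp

lemma neg_mul_exp_le {α β t : ℝ} (hβ : 0 < β) :
    -t * Real.exp (α * t) ≤ β⁻¹ * Real.exp ((α - β) * t) := by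
  have h : -(β * t) ≤ Real.exp (-(β * t)) := by linarith [Real.add_one_le_exp (-(β * t))]
  rw [show (α - β) * t = -(β * t) + α * t by ring, Real.exp_add, ← mul_assoc, ← div_eq_inv_mul]
  refine mul_le_mul_of_nonneg_right ?_ (Real.exp_pos _).le
  rw [le_div_iff₀ hβ]
  linarith

variable {a : ℂ}

lemma norm_mul_cexp_le (ha : 0 < a.re) {t : ℝ} (ht : t ≤ 0) :
    ‖(t : ℂ) * Complex.exp (a * t)‖ ≤ (a.re / 2)⁻¹ * Real.exp (a.re / 2 * t) := by
  have h := neg_mul_exp_le (α := a.re) (t := t) (half_pos ha)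
  rw [norm_mul, Complex.norm_exp, Complex.norm_real, Real.norm_of_nonpos ht]
  simpa [sub_half] using h

lemma integrableOn_mul_cexp_Iic (ha : 0 < a.re) :
    IntegrableOn (fun t : ℝ => (t : ℂ) * Complex.exp (a * t)) (Iic 0) := by
  refine ((integrableOn_exp_mul_Iic (half_pos ha) 0).const_mul (a.re / 2)⁻¹).mono'
    (by fun_prop) ?_
  filter_upwards [ae_restrict_mem measurableSet_Iic] with t ht using norm_mul_cexp_le ha ht

lemma tendsto_exp_mul_atBot {β : ℝ} (hβ : 0 < β) :
    Tendsto (fun t => Real.exp (β * t)) atBot (𝓝 0) :=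
  Real.tendsto_exp_atBot.comp (tendsto_id.const_mul_atBot hβ)

lemma tendsto_cexp_mul_atBot (ha : 0 < a.re) :
    Tendsto (fun t : ℝ => Complex.exp (a * t)) atBot (𝓝 0) :=
  squeeze_zero_norm (fun t => by simp [Complex.norm_exp]) (tendsto_exp_mul_atBot ha)

lemma tendsto_mul_cexp_mul_atBot (ha : 0 < a.re) :
    Tendsto (fun t : ℝ => (t : ℂ) * Complex.exp (a * t)) atBot (𝓝 0) := by
  have hlim := (tendsto_exp_mul_atBot (half_pos ha)).const_mul (a.re / 2)⁻¹
  rw [mul_zero] at hlim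
  refine squeeze_zero_norm' ?_ hlim
  filter_upwards [eventually_le_atBot 0] with t ht using norm_mul_cexp_le ha ht

lemma integral_mul_cexp_Iic (ha : 0 < a.re) :
    ∫ t : ℝ in Iic 0, (t : ℂ) * Complex.exp (a * t) = -(1 / a ^ 2) := by
  have hne : a ≠ 0 := fun h => by simp [h] at ha
  have hderiv (t : ℝ) : HasDerivAt (fun t : ℝ =>
      a⁻¹ * ((t : ℂ) * Complex.exp (a * t)) - (a ^ 2)⁻¹ * Complex.exp (a * t))
      ((t : ℂ) * Complex.exp (a * t)) t := by
    have hexp : HasDerivAt (fun z : ℂ => Complex.exp (a * z))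
        (Complex.exp (a * t) * (a * 1)) (t : ℂ) := ((hasDerivAt_id' (t : ℂ)).const_mul a).cexp
    refine ((((hasDerivAt_id' (t : ℂ)).fun_mul hexp).const_mul a⁻¹).fun_sub
      (hexp.const_mul (a ^ 2)⁻¹)).comp_ofReal.congr_deriv ?_
    field_simp
    ring
  rw [integral_Iic_of_hasDerivAt_of_tendsto' (fun t _ => hderiv t) (integrableOn_mul_cexp_Iic ha)
    (((tendsto_mul_cexp_mul_atBot ha).const_mul a⁻¹).sub
      ((tendsto_cexp_mul_atBot ha).const_mul (a ^ 2)⁻¹))]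
  simp

end MulExp

/-- A continuous function which differs from `(A - B * t) * exp (l * t)` on `(-∞, 0]` by a faster
decaying exponential. Its transform has principal part `A / (l - z) + B / (l - z) ^ 2` at `l`, and
the correction, which makes it continuous at `0`, makes the transform decay quadratically. -/
noncomputable def poleModel (l : ℝ) (A B : ℂ) : ℝ → ℂ :=
  (Iic 0).indicator fun t : ℝ =>
    A * (Complex.exp (l * t) - Complex.exp ((l + 1) * t)) - B * (t * Complex.exp (l * t))

section PoleModel

variable (l : ℝ) (A B : ℂ)

lemma continuous_poleModel : Continuous (poleModel l A B) := by
  refine continuous_indicator (fun t ht => ?_) (by fun_prop)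
  obtain rfl : t = 0 := by simpa using ht
  simp

lemma poleModel_mul_cexp (z : ℂ) (t : ℝ) :
    poleModel l A B t * Complex.exp (-(z * t)) = (Iic 0).indicator (fun t : ℝ =>
      A * (Complex.exp ((l - z) * t) - Complex.exp ((l + 1 - z) * t))
        - B * (t * Complex.exp ((l - z) * t))) t := by
  have hexp (w : ℂ) : Complex.exp ((w - z) * t) = Complex.exp (w * t) * Complex.exp (-(z * t)) := by
    rw [← Complex.exp_add]
    ring_nf
  simp only [poleModel, indicator_apply]
  split_ifs
  · rw [hexp l, hexp (l + 1)]
    ring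
  · exact zero_mul _

variable {l} {z : ℂ}

lemma laplaceConvergent_poleModel (hz : z.re < l) : LaplaceConvergent (poleModel l A B) z := by
  have h₁ : 0 < ((l : ℂ) - z).re := by simpa using hz
  have h₂ : 0 < ((l : ℂ) + 1 - z).re := by simp; linarith
  simp only [LaplaceConvergent, poleModel_mul_cexp]
  rw [integrable_indicator_iff measurableSet_Iic]
  exact (((integrableOn_exp_mul_complex_Iic h₁ 0).sub
    (integrableOn_exp_mul_complex_Iic h₂ 0)).const_mul A).sub
      ((integrableOn_mul_cexp_Iic h₁).const_mul B)

lemma laplace_poleModel (hz : z.re < l) : laplace (poleModel l A B) z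
    = A * (1 / (l - z) - 1 / (l + 1 - z)) + B * (1 / (l - z) ^ 2) := by
  have h₁ : 0 < ((l : ℂ) - z).re := by simpa using hz
  have h₂ : 0 < ((l : ℂ) + 1 - z).re := by simp; linarith
  have i₁ := integrableOn_exp_mul_complex_Iic h₁ 0
  have i₂ := integrableOn_exp_mul_complex_Iic h₂ 0
  simp only [laplace, poleModel_mul_cexp]
  rw [integral_indicator measurableSet_Iic]
  refine (integral_sub ((i₁.sub i₂).const_mul A)
    ((integrableOn_mul_cexp_Iic h₁).const_mul B)).trans ?_
  simp only [integral_const_mul, Pi.sub_apply]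
  rw [integral_sub i₁ i₂, integral_exp_mul_complex_Iic h₁, integral_exp_mul_complex_Iic h₂,
    integral_mul_cexp_Iic h₁]
  simp

end PoleModel

/-- What is left of `E z / (z - l) ^ 2` after subtracting the transform of the `poleModel` with
the same principal part at `l`. -/
noncomputable def regularPart (E : ℂ → ℂ) (l : ℝ) (z : ℂ) : ℂ :=
  dslope (dslope E l) l z - deriv E l / (l + 1 - z)

section RegularPart

variable {E : ℂ → ℂ} {l : ℝ}

lemma regularPart_of_ne (E : ℂ → ℂ) {z : ℂ} (hz : z ≠ l) :
    regularPart E l z = E z / (z - l) ^ 2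
      - (-deriv E l * (1 / (l - z) - 1 / (l + 1 - z)) + E l * (1 / (l - z) ^ 2)) := by
  have h₁ := sub_smul_dslope E (l : ℂ) z
  have h₂ := sub_smul_dslope (dslope E l) (l : ℂ) z
  rw [dslope_same] at h₂
  simp only [smul_eq_mul] at h₁ h₂
  have hz' : z - (l : ℂ) ≠ 0 := sub_ne_zero.2 hz
  have h₃ : dslope (dslope E l) l z = (E z - E l - deriv E l * (z - l)) / (z - l) ^ 2 := by
    rw [eq_div_iff (pow_ne_zero 2 hz')]
    linear_combination (z - l) * h₂ + h₁
  rw [regularPart, h₃, show (l : ℂ) - z = -(z - l) by ring, neg_sq, div_neg]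
  field_simp
  ring

lemma norm_regularPart_le {M : ℝ} {z : ℂ} (hE : ‖E z‖ ≤ M) (hz : z.im ≠ 0) :
    ‖regularPart E l z‖ ≤ (M + ‖deriv E l‖ + ‖E l‖) / z.im ^ 2 := by
  have hpos : 0 < |z.im| := abs_pos.2 hz
  have him (x : ℝ) : |z.im| ≤ ‖(x : ℂ) - z‖ := by
    simpa using Complex.abs_im_le_norm ((x : ℂ) - z)
  have hsub (x : ℝ) : (x : ℂ) - z ≠ 0 := norm_pos_iff.1 (hpos.trans_le (him x))
  have hsq : ‖1 / ((l : ℂ) - z) ^ 2‖ ≤ 1 / z.im ^ 2 := by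
    rw [norm_div, norm_one, norm_pow, ← sq_abs z.im]
    exact one_div_le_one_div_of_le (by positivity) (pow_le_pow_left₀ hpos.le (him l) 2)
  have hdiff : ‖1 / ((l : ℂ) - z) - 1 / ((l : ℂ) + 1 - z)‖ ≤ 1 / z.im ^ 2 := by
    have hsub₁ := hsub (l + 1)
    have him₁ := him (l + 1)
    push_cast at hsub₁ him₁
    rw [div_sub_div _ _ (hsub l) hsub₁, norm_div, norm_mul, ← sq_abs z.im, sq,
      show 1 * ((l : ℂ) + 1 - z) - (l - z) * 1 = 1 by ring, norm_one]
    exact one_div_le_one_div_of_le (by positivity)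
      (mul_le_mul (him l) him₁ hpos.le (norm_nonneg _))
  rw [regularPart_of_ne E fun h => hz (by simp [h]), ← mul_one_div (E z),
    show (z - l) ^ 2 = ((l : ℂ) - z) ^ 2 by ring]
  calc
    _ ≤ ‖E z * (1 / ((l : ℂ) - z) ^ 2)‖ + (‖-deriv E l * (1 / (l - z) - 1 / (l + 1 - z))‖
        + ‖E l * (1 / ((l : ℂ) - z) ^ 2)‖) :=
      (norm_sub_le _ _).trans (add_le_add_right (norm_add_le _ _) _)
    _ ≤ M * (1 / z.im ^ 2) + (‖deriv E l‖ * (1 / z.im ^ 2) + ‖E l‖ * (1 / z.im ^ 2)) := by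
        rw [norm_mul, norm_mul, norm_mul, norm_neg]
        gcongr
        exact (norm_nonneg _).trans hE
    _ = _ := by ring

lemma differentiableOn_regularPart {δ : ℝ} (hδ : 0 < δ) (hδ₁ : δ < 1)
    (hE : DifferentiableOn ℂ E {z | z.re ∈ Icc (l - δ) (l + δ)}) :
    DifferentiableOn ℂ (regularPart E l) {z | z.re ∈ Icc (l - δ) (l + δ)} := by
  have hnhds : {z : ℂ | z.re ∈ Icc (l - δ) (l + δ)} ∈ 𝓝 (l : ℂ) :=
    Complex.continuous_re.continuousAt.preimage_mem_nhds
      (Icc_mem_nhds (by simpa using hδ) (by simpa using hδ))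
  have hdslope := (Complex.differentiableOn_dslope hnhds).2
    ((Complex.differentiableOn_dslope hnhds).2 hE)
  refine hdslope.sub ((differentiableOn_const _).div (by fun_prop) fun z hz h => ?_)
  have hre : l + 1 - z.re = 0 := by simpa using congrArg Complex.re h
  linarith [hz.2]

end RegularPart

lemma exists_norm_le_div_one_add_im_sq {F : ℂ → ℂ} {a b K Y : ℝ}
    (hF : ContinuousOn F {z | z.re ∈ Icc a b})
    (hK : ∀ z : ℂ, z.re ∈ Icc a b → Y ≤ |z.im| → ‖F z‖ ≤ K / z.im ^ 2) :
    ∃ M, ∀ z : ℂ, z.re ∈ Icc a b → ‖F z‖ ≤ M / (1 + z.im ^ 2) := by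
  set R := max Y 1
  obtain ⟨M₀, hM₀⟩ := ((isCompact_Icc (a := a) (b := b)).reProdIm
    (isCompact_Icc (a := -R) (b := R))).exists_bound_of_continuousOn (hF.mono fun z hz => hz.1)
  refine ⟨max (2 * K) (M₀ * (1 + R ^ 2)), fun z hz => ?_⟩
  have hpos : 0 < 1 + z.im ^ 2 := by positivity
  rw [le_div_iff₀ hpos]
  rcases le_total |z.im| R with him | him
  · have hz₀ := hM₀ z ⟨hz, abs_le.1 him⟩
    have hsq : z.im ^ 2 ≤ R ^ 2 := by rw [← sq_abs]; gcongr
    exact le_max_of_le_right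
      (mul_le_mul hz₀ (by linarith) hpos.le ((norm_nonneg _).trans hz₀))
  · have hsq : 1 ≤ z.im ^ 2 := by rw [← sq_abs]; nlinarith [le_max_right Y 1]
    have hz₁ := hK z hz ((le_max_left _ _).trans him)
    rw [le_div_iff₀ (by linarith)] at hz₁
    exact le_max_of_le_left (by nlinarith [norm_nonneg (F z)])

section Expansion

variable {f : ℝ → ℂ} {l δ : ℝ} {E : ℂ → ℂ}

lemma laplace_sub_poleModel {z : ℂ} (hz : z.re < l) (hf : LaplaceConvergent f z)
    (hE : (z - l) ^ 2 * laplace f z = E z) :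
    laplace (fun t => f t - poleModel l (-deriv E l) (E l) t) z = regularPart E l z := by
  have hne : z ≠ l := fun h => by simp [h] at hz
  rw [laplace_sub hf (laplaceConvergent_poleModel _ _ hz), laplace_poleModel _ _ hz,
    regularPart_of_ne E hne, ← hE, mul_div_cancel_left₀ _ (pow_ne_zero 2 (sub_ne_zero.2 hne))]

/-- If `E z / (z - l) ^ 2` continues the transform of `f` across the line `re z = l`, then the
transform of `f - poleModel l (-E' l) (E l)` continues to `regularPart E l`, which has no pole. -/
lemma exists_norm_sub_poleModel_le (hf : Continuous f) (hδ : 0 < δ) (hδ₁ : δ < 1) {M Y : ℝ}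
    (hE : DifferentiableOn ℂ E {z | z.re ∈ Icc (l - δ) (l + δ)})
    (hconv : ∀ z : ℂ, z.re = l - δ → LaplaceConvergent f z)
    (hlap : ∀ z : ℂ, z.re = l - δ → (z - l) ^ 2 * laplace f z = E z)
    (hM : ∀ z : ℂ, z.re ∈ Icc (l - δ) (l + δ) → Y ≤ |z.im| → ‖E z‖ ≤ M) :
    ∃ C, ∀ t, ‖f t - poleModel l (-deriv E l) (E l) t‖ ≤ C * Real.exp ((l + δ) * t) := by
  have hF := differentiableOn_regularPart hδ hδ₁ hE
  have hlt {z : ℂ} (hz : z.re = l - δ) : z.re < l := by linarith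
  have hline : ((l - δ : ℝ) : ℂ).re = l - δ := Complex.ofReal_re _
  obtain ⟨M', hM'⟩ := exists_norm_le_div_one_add_im_sq (Y := max Y 1) hF.continuousOn
    fun z hz him => norm_regularPart_le (hM z hz ((le_max_left _ _).trans him))
      (abs_pos.1 (zero_lt_one.trans_le ((le_max_right _ _).trans him)))
  exact exists_norm_le_exp_of_laplace_eq (hf.sub (continuous_poleModel l _ _)) (by linarith)
    ((hconv _ hline).sub (laplaceConvergent_poleModel _ _ (hlt hline)))
    (fun z hz => laplace_sub_poleModel (hlt hz) (hconv z hz) (hlap z hz)) hF hM'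

lemma exists_expansion_of_norm_sub_poleModel_le (hδ₁ : δ < 1) {A B : ℂ} {C : ℝ}
    (hC : ∀ t, ‖f t - poleModel l A B t‖ ≤ C * Real.exp ((l + δ) * t)) :
    ∃ C, ∀ t ≤ 0, ‖f t - (A - B * t) * Complex.exp (l * t)‖ ≤ C * Real.exp ((l + δ) * t) := by
  refine ⟨C + ‖A‖, fun t ht => ?_⟩
  have hmodel : f t - (A - B * t) * Complex.exp (l * t)
      = (f t - poleModel l A B t) - A * Complex.exp (((l + 1 : ℝ) : ℂ) * t) := by
    rw [poleModel, indicator_of_mem (mem_Iic.2 ht)]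
    push_cast
    ring
  rw [hmodel, add_mul]
  refine (norm_sub_le _ _).trans (add_le_add (hC t) ?_)
  rw [norm_mul, Complex.norm_exp, Complex.re_mul_ofReal, Complex.ofReal_re]
  exact mul_le_mul_of_nonneg_left (Real.exp_le_exp.2 (by nlinarith)) (norm_nonneg _)

end Expansion

lemma isLittleO_of_expansion {f : ℝ → ℝ} {l A B C δ : ℝ} (hδ : 0 < δ)
    (h : ∀ t ≤ 0, |f t - (A - B * t) * Real.exp (l * t)| ≤ C * Real.exp ((l + δ) * t)) (s : ℝ) :
    (fun t => f (t + s) * Real.exp (-(l * t)) - (A - B * (t + s)) * Real.exp (l * s))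
      =o[atBot] fun t => Real.exp (δ / 2 * t) := by
  have hO : (fun t => f (t + s) * Real.exp (-(l * t)) - (A - B * (t + s)) * Real.exp (l * s))
      =O[atBot] fun t => Real.exp (δ * t) := by
    refine IsBigO.of_bound (C * Real.exp ((l + δ) * s)) ?_
    filter_upwards [eventually_le_atBot (-s)] with t ht
    have hfactor : f (t + s) * Real.exp (-(l * t)) - (A - B * (t + s)) * Real.exp (l * s)
        = (f (t + s) - (A - B * (t + s)) * Real.exp (l * (t + s))) * Real.exp (-(l * t)) := by
      have hexp : Real.exp (l * (t + s)) * Real.exp (-(l * t)) = Real.exp (l * s) := by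
        rw [← Real.exp_add]
        ring_nf
      linear_combination (A - B * (t + s)) * hexp
    rw [hfactor, norm_mul, Real.norm_of_nonneg (Real.exp_pos _).le,
      Real.norm_of_nonneg (Real.exp_pos _).le]
    refine (mul_le_mul_of_nonneg_right (h (t + s) (by linarith)) (Real.exp_pos _).le).trans_eq ?_
    rw [mul_assoc, mul_assoc, ← Real.exp_add, ← Real.exp_add]
    ring_nf
  refine hO.trans_isLittleO (Real.isLittleO_exp_comp_exp_comp.2 ?_)
  exact (tendsto_id.const_mul_atBot_of_neg (neg_lt_zero.2 (half_pos hδ))).congr fun t => by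
    simp only [id_eq]
    ring

/-! ### Convexity and the tangent line -/

lemma convexOn_inv_of_concaveOn {s : Set ℝ} {f : ℝ → ℝ} (hf : ConcaveOn ℝ s f)
    (hpos : ∀ x ∈ s, 0 < f x) : ConvexOn ℝ s fun x => (f x)⁻¹ := by
  refine ⟨hf.1, fun x hx y hy p q hp hq hpq => ?_⟩
  have hmean : 0 < p • f x + q • f y :=
    (convex_Ioi (0 : ℝ)) (mem_Ioi.2 (hpos x hx)) (mem_Ioi.2 (hpos y hy)) hp hq hpq
  refine (inv_anti₀ hmean (hf.2 hx hy hp hq hpq)).trans ?_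
  simpa only [zpow_neg_one] using (convexOn_zpow (𝕜 := ℝ) (-1)).2
    (mem_Ioi.2 (hpos x hx)) (mem_Ioi.2 (hpos y hy)) hp hq hpq

lemma add_mul_sub_le_of_convexOn {s : Set ℝ} {f : ℝ → ℝ} {x y m : ℝ} (hf : ConvexOn ℝ s f)
    (hx : x ∈ s) (hy : y ∈ s) (hm : HasDerivAt f m x) : f x + m * (y - x) ≤ f y := by
  rcases lt_trichotomy x y with hxy | rfl | hxy
  · have h := hf.le_slope_of_hasDerivAt hx hy hxy hm
    rw [slope_def_field, le_div_iff₀ (sub_pos.2 hxy)] at h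
    linarith
  · simp
  · have h := hf.slope_le_of_hasDerivAt hy hx hxy hm
    rw [slope_def_field, div_le_iff₀ (sub_pos.2 hxy)] at h
    linarith

/-! ### The characteristic function -/

/-- The characteristic function `chi0` at complex arguments. -/
noncomputable def chiC (b c τ : ℝ) (z : ℂ) : ℂ :=
  z ^ 2 - c * z + 1 / (1 - b * Complex.exp (-(z * c * τ)))

lemma chiC_ofReal (b c τ x : ℝ) : chiC b c τ x = (chi0 b c τ x : ℂ) := by
  simp [chiC, chi0]

lemma hasDerivAt_of_forall_ofReal_eq {f : ℝ → ℝ} {F : ℂ → ℂ} {x : ℝ} (hf : ∀ x : ℝ, F x = f x)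
    (hF : DifferentiableAt ℂ F x) :
    HasDerivAt f (deriv f x) x ∧ HasDerivAt F (deriv f x : ℝ) (x : ℂ) := by
  have hreal : HasDerivAt f (deriv f x) x := by
    have hre := hF.hasDerivAt.real_of_complex.differentiableAt.hasDerivAt
    simpa only [hf, Complex.ofReal_re] using hre
  have hofReal : HasDerivAt (fun x : ℝ => (f x : ℂ)) (deriv F x) x := by
    simpa only [hf] using hF.hasDerivAt.comp_ofReal
  exact ⟨hreal, hofReal.unique hreal.ofReal_comp ▸ hF.hasDerivAt⟩

section Chi

variable {b c τ : ℝ}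

section Delay

variable (hb : b ∈ Ico 0 1) (hcτ : 0 ≤ c * τ)
include hb

lemma norm_mul_cexp_delay (z : ℂ) :
    ‖(b : ℂ) * Complex.exp (-(z * c * τ))‖ = b * Real.exp (-(z.re * c * τ)) := by
  rw [norm_mul, Complex.norm_exp, Complex.norm_real, Real.norm_of_nonneg hb.1]
  simp

lemma one_sub_mul_exp_le_norm (z : ℂ) :
    1 - b * Real.exp (-(z.re * c * τ)) ≤ ‖1 - (b : ℂ) * Complex.exp (-(z * c * τ))‖ := by
  rw [← norm_mul_cexp_delay hb]
  simpa using norm_sub_norm_le (1 : ℂ) ((b : ℂ) * Complex.exp (-(z * c * τ)))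

include hcτ

lemma one_sub_le_one_sub_mul_exp {x : ℝ} (hx : 0 ≤ x) :
    1 - b ≤ 1 - b * Real.exp (-(x * c * τ)) := by
  refine sub_le_sub_left (mul_le_of_le_one_right hb.1 (Real.exp_le_one_iff.2 ?_)) 1
  rw [mul_assoc]
  exact neg_nonpos.2 (mul_nonneg hx hcτ)

lemma one_sub_mul_exp_pos {x : ℝ} (hx : 0 ≤ x) : 0 < 1 - b * Real.exp (-(x * c * τ)) :=
  (sub_pos.2 hb.2).trans_le (one_sub_le_one_sub_mul_exp hb hcτ hx)

variable {z : ℂ}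

lemma one_sub_mul_cexp_ne_zero (hz : 0 ≤ z.re) :
    1 - (b : ℂ) * Complex.exp (-(z * c * τ)) ≠ 0 :=
  norm_pos_iff.1 ((one_sub_mul_exp_pos hb hcτ hz).trans_le (one_sub_mul_exp_le_norm hb z))

lemma norm_one_div_one_sub_le (hz : 0 ≤ z.re) :
    ‖1 / (1 - (b : ℂ) * Complex.exp (-(z * c * τ)))‖
      ≤ 1 / (1 - b * Real.exp (-(z.re * c * τ))) := by
  rw [norm_div, norm_one]
  exact one_div_le_one_div_of_le (one_sub_mul_exp_pos hb hcτ hz) (one_sub_mul_exp_le_norm hb z)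

lemma differentiableAt_chiC (hz : 0 ≤ z.re) : DifferentiableAt ℂ (chiC b c τ) z := by
  have hne := one_sub_mul_cexp_ne_zero hb hcτ hz
  unfold chiC
  fun_prop (disch := assumption)

lemma half_sq_le_norm_chiC (hz : 0 ≤ z.re) (him : 2 / (1 - b) ≤ z.im ^ 2) :
    z.im ^ 2 / 2 ≤ ‖chiC b c τ z‖ := by
  have hquad : z.im ^ 2 ≤ ‖z ^ 2 - c * z‖ := by
    have him_sub : |z.im| ≤ ‖z - c‖ := by simpa using Complex.abs_im_le_norm (z - c)
    rw [show z ^ 2 - c * z = z * (z - c) by ring, norm_mul, ← sq_abs, sq]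
    exact mul_le_mul (Complex.abs_im_le_norm z) him_sub (abs_nonneg _) (norm_nonneg _)
  have hsymbol := (norm_one_div_one_sub_le hb hcτ hz).trans
    (one_div_le_one_div_of_le (sub_pos.2 hb.2) (one_sub_le_one_sub_mul_exp hb hcτ hz))
  have hsub := norm_sub_le_norm_add (z ^ 2 - c * z)
    (1 / (1 - (b : ℂ) * Complex.exp (-(z * c * τ))))
  have hhalf : 2 / (1 - b) = 2 * (1 / (1 - b)) := by ring
  unfold chiC
  linarith

lemma hasDerivAt_chi0 {x : ℝ} (hx : 0 ≤ x) : HasDerivAt (chi0 b c τ) (deriv (chi0 b c τ) x) x :=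
  (hasDerivAt_of_forall_ofReal_eq (chiC_ofReal b c τ)
    (differentiableAt_chiC hb hcτ (by simpa using hx))).1

lemma hasDerivAt_chiC {x : ℝ} (hx : 0 ≤ x) :
    HasDerivAt (chiC b c τ) (deriv (chi0 b c τ) x : ℝ) (x : ℂ) :=
  (hasDerivAt_of_forall_ofReal_eq (chiC_ofReal b c τ)
    (differentiableAt_chiC hb hcτ (by simpa using hx))).2

lemma convexOn_chi0_sub_sq : ConvexOn ℝ (Ici 0) fun x => chi0 b c τ x - x ^ 2 := by
  have hexp : ConvexOn ℝ univ fun x => Real.exp (-(x * c * τ)) := by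
    refine (convexOn_exp.comp_linearMap (LinearMap.mul ℝ ℝ (-(c * τ)))).congr fun x _ => ?_
    simp only [Function.comp_apply, LinearMap.mul_apply']
    ring_nf
  have hdenom : ConcaveOn ℝ (Ici 0) fun x => 1 - b * Real.exp (-(x * c * τ)) :=
    (concaveOn_const 1 (convex_Ici 0)).sub
      ((hexp.subset (subset_univ _) (convex_Ici 0)).smul hb.1)
  have hlin : ConvexOn ℝ (Ici 0) fun x => -c * x :=
    (LinearMap.mul ℝ ℝ (-c)).convexOn (convex_Ici 0)
  refine (hlin.add (convexOn_inv_of_concaveOn hdenom fun x hx =>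
    one_sub_mul_exp_pos hb hcτ hx)).congr fun x _ => ?_
  simp only [Pi.add_apply, chi0]
  ring

section Zero

variable {l : ℝ} (hl : 0 < l) (h₀ : chi0 b c τ l = 0)
include hl h₀

lemma sq_le_chi0 (h₁ : deriv (chi0 b c τ) l = 0) {x : ℝ} (hx : 0 ≤ x) :
    (x - l) ^ 2 ≤ chi0 b c τ x := by
  have htangent := add_mul_sub_le_of_convexOn (convexOn_chi0_sub_sq hb hcτ) hl.le hx
    ((hasDerivAt_chi0 hb hcτ hl.le).fun_sub (hasDerivAt_pow 2 l))
  simp only [h₀, h₁] at htangent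
  norm_num at htangent
  linarith

lemma lt_of_chi0_eq_zero : l < c := by
  have hinv := one_div_pos.2 (one_sub_mul_exp_pos hb hcτ hl.le)
  unfold chi0 at h₀
  nlinarith

/-- A zero maximizes the modulus of `1 / (1 - b * exp (-(z * c * τ)))` on its vertical line, while
`‖z * (z - c)‖` is minimal at the real point only. -/
lemma eq_ofReal_of_chiC_eq_zero {z : ℂ} (hz : z.re = l) (h : chiC b c τ z = 0) : z = l := by
  have hlc := sub_pos.2 (lt_of_chi0_eq_zero hb hcτ hl h₀)
  have hle : ‖z * (z - c)‖ ≤ l * (c - l) := by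
    have hnorm := norm_one_div_one_sub_le hb hcτ (hz ▸ hl.le)
    rw [hz] at hnorm
    have hneg : z * (z - c) = -(1 / (1 - (b : ℂ) * Complex.exp (-(z * c * τ)))) := by
      unfold chiC at h
      linear_combination h
    rw [hneg, norm_neg]
    unfold chi0 at h₀
    linarith
  have hsq : ‖z * (z - c)‖ ^ 2 = (l ^ 2 + z.im ^ 2) * ((c - l) ^ 2 + z.im ^ 2) := by
    rw [norm_mul, mul_pow, Complex.sq_norm, Complex.sq_norm, Complex.normSq_apply,
      Complex.normSq_apply]
    simp only [Complex.sub_re, Complex.sub_im, Complex.ofReal_re, Complex.ofReal_im, hz]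
    ring
  have hle_sq := pow_le_pow_left₀ (norm_nonneg _) hle 2
  rw [hsq] at hle_sq
  have him : z.im ^ 2 ≤ 0 := by
    by_contra! hpos
    nlinarith [mul_pos hpos (pow_pos hl 2), mul_pos hpos (pow_pos hlc 2), mul_pos hpos hpos]
  exact Complex.ext hz (by simpa using le_antisymm him (sq_nonneg _))

lemma exists_gt_chi0_eq_zero (hneg : deriv (chi0 b c τ) l < 0) : ∃ x, l < x ∧ chi0 b c τ x = 0 := by
  have hlc := lt_of_chi0_eq_zero hb hcτ hl h₀
  have hslope := (hasDerivAt_iff_tendsto_slope.1 (hasDerivAt_chi0 hb hcτ hl.le)).mono_left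
    (nhdsWithin_mono _ fun x (hx : x ∈ Ioi l) => hx.ne')
  obtain ⟨x, hx, hlx, hxc⟩ := ((hslope.eventually_lt_const hneg).and (Ioo_mem_nhdsGT hlc)).exists
  rw [slope_def_field, h₀, sub_zero, div_lt_iff₀ (sub_pos.2 hlx), zero_mul] at hx
  have hcont : ContinuousOn (chi0 b c τ) (Icc x c) := fun y hy =>
    (hasDerivAt_chi0 hb hcτ (by linarith [hy.1])).continuousAt.continuousWithinAt
  have hc : 0 ≤ chi0 b c τ c := by
    have hinv := one_div_pos.2 (one_sub_mul_exp_pos hb hcτ (hl.trans hlc).le)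
    unfold chi0
    linarith
  obtain ⟨y, hy, hy₀⟩ := intermediate_value_Icc hxc.le hcont ⟨hx.le, hc⟩
  exact ⟨y, hlx.trans_le hy.1, hy₀⟩

end Zero

end Delay

end Chi

/-! ### Zeros and divided differences of holomorphic functions -/

section Dslope

variable {F : ℂ → ℂ} {w : ℂ}

lemma eq_sub_mul_dslope (h₀ : F w = 0) (z : ℂ) : F z = (z - w) * dslope F w z := by
  simpa [h₀] using (sub_smul_dslope F w z).symm

lemma eq_sub_sq_mul_dslope_dslope (h₀ : F w = 0) (h₁ : deriv F w = 0) (z : ℂ) :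
    F z = (z - w) ^ 2 * dslope (dslope F w) w z := by
  rw [eq_sub_mul_dslope h₀ z, eq_sub_mul_dslope ((dslope_same F w).trans h₁) z]
  ring

lemma differentiableAt_dslope {s : Set ℂ} (hs : IsOpen s) (hw : w ∈ s)
    (hF : ∀ z ∈ s, DifferentiableAt ℂ F z) : ∀ z ∈ s, DifferentiableAt ℂ (dslope F w) z :=
  fun _ hz => ((Complex.differentiableOn_dslope (hs.mem_nhds hw)).2
    fun z hz => (hF z hz).differentiableWithinAt).differentiableAt (hs.mem_nhds hz)

lemma one_le_re_dslope_dslope {f : ℝ → ℝ} {l : ℝ} (hf : ∀ x : ℝ, F x = f x)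
    (hF : ∀ᶠ z in 𝓝 (l : ℂ), DifferentiableAt ℂ F z) (h₀ : F l = 0) (h₁ : deriv F l = 0)
    (hsq : ∀ x > l, (x - l) ^ 2 ≤ f x) : 1 ≤ (dslope (dslope F l) l l).re := by
  set H := dslope (dslope F l) l
  have hH : ContinuousAt H (l : ℂ) := by
    have hdiff : DifferentiableOn ℂ F {z | DifferentiableAt ℂ F z} :=
      fun z hz => DifferentiableAt.differentiableWithinAt hz
    exact (((Complex.differentiableOn_dslope hF).2
      ((Complex.differentiableOn_dslope hF).2 hdiff)).differentiableAt hF).continuousAt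
  have hlim : Tendsto (fun x : ℝ => (H x).re) (𝓝[>] l) (𝓝 (H l).re) :=
    ((Complex.continuous_re.continuousAt.comp hH).comp
      Complex.continuous_ofReal.continuousAt).mono_left nhdsWithin_le_nhds
  refine ge_of_tendsto hlim ?_
  filter_upwards [self_mem_nhdsWithin] with x hx
  have hpos : 0 < (x - l) ^ 2 := pow_pos (sub_pos.2 hx) 2
  have hre : f x = (x - l) ^ 2 * (H x).re := by
    have h := congrArg Complex.re (eq_sub_sq_mul_dslope_dslope h₀ h₁ (x : ℂ))
    rwa [hf, ← Complex.ofReal_sub, ← Complex.ofReal_pow, Complex.re_ofReal_mul,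
      Complex.ofReal_re] at h
  exact le_of_mul_le_mul_left (by linarith [hsq x hx]) hpos

end Dslope

lemma eventually_forall_re_eq_ne_zero {H : ℂ → ℂ} {l Y : ℝ}
    (hH : ∀ z : ℂ, z.re = l → ContinuousAt H z) (hline : ∀ z : ℂ, z.re = l → H z ≠ 0)
    (him : ∀ᶠ x in 𝓝 l, ∀ z : ℂ, z.re = x → Y ≤ |z.im| → H z ≠ 0) :
    ∀ᶠ x in 𝓝 l, ∀ z : ℂ, z.re = x → H z ≠ 0 := by
  have hcompact : ∀ᶠ x in 𝓝 l, ∀ y ∈ Icc (-Y) Y, H (Complex.mk x y) ≠ 0 := by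
    refine isCompact_Icc.eventually_forall_of_forall_eventually fun y _ => ?_
    have hmk : ContinuousAt (fun p : ℝ × ℝ => Complex.mk p.1 p.2) (l, y) :=
      Complex.equivRealProdCLM.symm.continuous.continuousAt
    exact (ContinuousAt.comp (hH _ rfl) hmk).eventually_ne (hline _ rfl)
  filter_upwards [hcompact, him] with x hx hx' z hz
  rcases le_total Y |z.im| with h | h
  · exact hx' z hz h
  · have hz' := hx z.im (abs_le.1 h)
    rwa [← hz] at hz'

/-! ### The delay operator -/

section Delay

variable {b c τ : ℝ} {φ : ℝ → ℝ}

lemma SBop_eq_Bop_sub (t : ℝ) : SBop b c τ φ t = Bop b c τ φ (t - c * τ) :=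
  tsum_congr fun j => by ring_nf

lemma continuous_Bop (hb : b ∈ Ico 0 1) {M : ℝ} (hM : ∀ t, |φ t| ≤ M) (hφ : Continuous φ) :
    Continuous (Bop b c τ φ) := by
  refine continuous_tsum (fun j => by fun_prop)
    ((summable_geometric_of_lt_one hb.1 hb.2).mul_right M) fun j t => ?_
  rw [norm_mul, Real.norm_of_nonneg (pow_nonneg hb.1 j), Real.norm_eq_abs]
  exact mul_le_mul_of_nonneg_left (hM _) (pow_nonneg hb.1 j)

variable (hb : b ∈ Ico 0 1) (hcτ : 0 ≤ c * τ) (hmono : Monotone φ) (hφ : ∀ t, 0 ≤ φ t)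
include hb hcτ hmono hφ

lemma pow_mul_delay_mem_Icc (j : ℕ) (t : ℝ) :
    b ^ j * φ (t - j * c * τ) ∈ Icc 0 (b ^ j * φ t) :=
  ⟨mul_nonneg (pow_nonneg hb.1 j) (hφ _), mul_le_mul_of_nonneg_left
    (hmono (sub_le_self t (mul_assoc (j : ℝ) c τ ▸ mul_nonneg j.cast_nonneg hcτ)))
    (pow_nonneg hb.1 j)⟩

lemma summable_Bop (t : ℝ) : Summable fun j : ℕ => b ^ j * φ (t - j * c * τ) :=
  ((summable_geometric_of_lt_one hb.1 hb.2).mul_right (φ t)).of_nonneg_of_le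
    (fun j => (pow_mul_delay_mem_Icc hb hcτ hmono hφ j t).1)
    fun j => (pow_mul_delay_mem_Icc hb hcτ hmono hφ j t).2

lemma self_le_Bop (t : ℝ) : φ t ≤ Bop b c τ φ t := by
  simpa [Bop] using (summable_Bop hb hcτ hmono hφ t).le_tsum 0
    fun j _ => (pow_mul_delay_mem_Icc hb hcτ hmono hφ j t).1

lemma one_sub_mul_Bop_le (t : ℝ) : (1 - b) * Bop b c τ φ t ≤ φ t := by
  have hgeom := (hasSum_geometric_of_lt_one hb.1 hb.2).mul_right (φ t)
  rw [← le_inv_mul_iff₀ (sub_pos.2 hb.2), ← hgeom.tsum_eq]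
  exact (summable_Bop hb hcτ hmono hφ t).tsum_le_tsum
    (fun j => (pow_mul_delay_mem_Icc hb hcτ hmono hφ j t).2) hgeom.summable

lemma Bop_eq_add_mul_Bop_sub (t : ℝ) :
    Bop b c τ φ t = φ t + b * Bop b c τ φ (t - c * τ) := by
  rw [Bop, (summable_Bop hb hcτ hmono hφ t).tsum_eq_zero_add, Bop, ← tsum_mul_left]
  congr 1
  · simp
  · refine tsum_congr fun j => ?_
    push_cast
    ring_nf

lemma one_sub_mul_Bop_lt_one (hb₀ : 0 < b) (h₁ : ∀ t, φ t ≤ 1) (n : ℕ) {t : ℝ}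
    (ht : φ (t - n * (c * τ)) < 1) : (1 - b) * Bop b c τ φ t < 1 := by
  induction n generalizing t with
  | zero => exact (one_sub_mul_Bop_le hb hcτ hmono hφ t).trans_lt (by simpa using ht)
  | succ n ih =>
    have hlt : (1 - b) * Bop b c τ φ (t - c * τ) < 1 := ih (by convert ht using 2; push_cast; ring)
    rw [Bop_eq_add_mul_Bop_sub hb hcτ hmono hφ]
    calc (1 - b) * (φ t + b * Bop b c τ φ (t - c * τ))
        = (1 - b) * φ t + b * ((1 - b) * Bop b c τ φ (t - c * τ)) := by ring
      _ < (1 - b) * 1 + b * 1 := add_lt_add_of_le_of_lt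
          (mul_le_mul_of_nonneg_left (h₁ t) (sub_nonneg.2 hb.2.le)) (mul_lt_mul_of_pos_left hlt hb₀)
      _ = 1 := by ring

lemma laplace_eq_mul_laplace_Bop {z : ℂ}
    (hB : LaplaceConvergent (fun t => (Bop b c τ φ t : ℂ)) z) :
    laplace (fun t => (φ t : ℂ)) z = (1 - b * Complex.exp (-(z * c * τ))) *
      laplace (fun t => (Bop b c τ φ t : ℂ)) z := by
  have hφB : (fun t => (φ t : ℂ))
      = fun t => (Bop b c τ φ t : ℂ) - b * (Bop b c τ φ (t - c * τ) : ℂ) := by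
    ext t
    rw [Bop_eq_add_mul_Bop_sub hb hcτ hmono hφ t]
    push_cast
    ring
  rw [hφB, laplace_sub hB ((hB.comp_sub_right (c * τ)).const_mul (b : ℂ)), laplace_const_mul,
    laplace_comp_sub_right (fun t => (Bop b c τ φ t : ℂ)), Complex.ofReal_mul, ← mul_assoc z]
  ring

end Delay

/-! ### Exponential growth rates -/

/-- The positive rates `σ` for which `f` is dominated by a multiple of `exp (σ t)`. -/
def rates (f : ℝ → ℝ) : Set ℝ := {σ | 0 < σ ∧ ∃ C, ∀ t, f t ≤ C * Real.exp (σ * t)}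

/-- The optimal exponential rate of growth of `f` from `-∞`. -/
noncomputable def rate (f : ℝ → ℝ) : ℝ := sSup (rates f)

lemma mem_rates_of_le_on_Iic {f : ℝ → ℝ} {σ C M T : ℝ} (hM : ∀ t, f t ≤ M) (hσ : 0 < σ)
    (h : ∀ t ≤ T, f t ≤ C * Real.exp (σ * t)) : σ ∈ rates f := by
  refine ⟨hσ, max C (max M 0 * Real.exp (-(σ * T))), fun t => ?_⟩
  rcases le_total t T with ht | ht
  · exact (h t ht).trans (mul_le_mul_of_nonneg_right (le_max_left _ _) (Real.exp_pos _).le)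
  · calc f t ≤ max M 0 := (hM t).trans (le_max_left _ _)
      _ ≤ max M 0 * Real.exp (σ * t - σ * T) := le_mul_of_one_le_right (le_max_right _ _)
          (Real.one_le_exp (sub_nonneg.2 (mul_le_mul_of_nonneg_left ht hσ.le)))
      _ = max M 0 * Real.exp (-(σ * T)) * Real.exp (σ * t) := by
          rw [mul_assoc, ← Real.exp_add, neg_add_eq_sub]
      _ ≤ _ := mul_le_mul_of_nonneg_right (le_max_right _ _) (Real.exp_pos _).le

lemma mem_rates_of_le_const_mul {f g : ℝ → ℝ} {a σ : ℝ} (hσ : σ ∈ rates f) (ha : 0 ≤ a)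
    (h : ∀ t, g t ≤ a * f t) : σ ∈ rates g := by
  obtain ⟨hσ₀, C, hC⟩ := hσ
  exact ⟨hσ₀, a * C, fun t => (h t).trans
    ((mul_le_mul_of_nonneg_left (hC t) ha).trans_eq (mul_assoc _ _ _).symm)⟩

lemma add_mem_rates_of_le_mul {f g h : ℝ → ℝ} {σ ρ : ℝ} (hσ : σ ∈ rates f) (hρ : ρ ∈ rates g)
    (hf : ∀ t, 0 ≤ f t) (hg : ∀ t, 0 ≤ g t) (hh : ∀ t, h t ≤ f t * g t) : σ + ρ ∈ rates h := by
  obtain ⟨hσ₀, C, hC⟩ := hσ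
  obtain ⟨hρ₀, K, hK⟩ := hρ
  refine ⟨add_pos hσ₀ hρ₀, C * K, fun t => (hh t).trans ?_⟩
  calc f t * g t ≤ C * Real.exp (σ * t) * (K * Real.exp (ρ * t)) :=
        mul_le_mul (hC t) (hK t) (hg t) ((hf t).trans (hC t))
    _ = C * K * Real.exp ((σ + ρ) * t) := by rw [add_mul, Real.exp_add]; ring

lemma mem_rates_of_laplaceConvergent {f : ℝ → ℝ} (hmono : Monotone f) (hf : ∀ t, 0 ≤ f t) {x : ℝ}
    (hx : 0 < x) (h : LaplaceConvergent (fun t => (f t : ℂ)) x) : x ∈ rates f := by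
  have hint := laplaceConvergent_ofReal_iff.1 h
  refine ⟨hx, (∫ t, f t * Real.exp (-(x * t))) * Real.exp x, fun t => ?_⟩
  have hIcc (s : ℝ) (hs : s ∈ Icc t (t + 1)) :
      f t * Real.exp (-(x * (t + 1))) ≤ f s * Real.exp (-(x * s)) :=
    mul_le_mul (hmono hs.1) (Real.exp_le_exp.2 (neg_le_neg (mul_le_mul_of_nonneg_left hs.2 hx.le)))
      (Real.exp_pos _).le (hf s)
  have hle : f t * Real.exp (-(x * (t + 1))) ≤ ∫ s, f s * Real.exp (-(x * s)) := by
    calc f t * Real.exp (-(x * (t + 1)))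
        = ∫ _ in Icc t (t + 1), f t * Real.exp (-(x * (t + 1))) := by simp
      _ ≤ ∫ s in Icc t (t + 1), f s * Real.exp (-(x * s)) :=
          setIntegral_mono_on (integrableOn_const (by simp)) hint.integrableOn measurableSet_Icc
            hIcc
      _ ≤ ∫ s, f s * Real.exp (-(x * s)) :=
          setIntegral_le_integral hint (ae_of_all _ fun s => mul_nonneg (hf s) (Real.exp_pos _).le)
  calc f t = f t * Real.exp (-(x * (t + 1))) * Real.exp (x * (t + 1)) := by
        rw [mul_assoc, ← Real.exp_add, neg_add_cancel, Real.exp_zero, mul_one]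
    _ ≤ _ := mul_le_mul_of_nonneg_right hle (Real.exp_pos _).le
    _ = _ := by rw [mul_assoc, ← Real.exp_add]; ring_nf

lemma laplaceConvergent_of_mem_rates {f : ℝ → ℝ} {σ M : ℝ} {z : ℂ} (hf : Continuous f)
    (hf₀ : ∀ t, 0 ≤ f t) (hM : ∀ t, f t ≤ M) (hσ : σ ∈ rates f) (h₀ : 0 < z.re) (hz : z.re < σ) :
    LaplaceConvergent (fun t => (f t : ℂ)) z := by
  obtain ⟨-, C, hC⟩ := hσ
  have hnorm (t : ℝ) : ‖(f t : ℂ)‖ = f t := by rw [Complex.norm_real, Real.norm_of_nonneg (hf₀ t)]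
  exact .of_norm_le (Complex.continuous_ofReal.comp hf).aestronglyMeasurable
    (fun t => (hnorm t).trans_le (hC t)) (fun t => (hnorm t).trans_le (hM t)) h₀ hz

/-! ### Wave profiles -/

/-- The quadratic part of the reaction term, kept on the right-hand side as the inhomogeneity of
the linearised profile equation. -/
noncomputable def nonlin (b c τ : ℝ) (φ : ℝ → ℝ) (t : ℝ) : ℝ :=
  Bop b c τ φ t * ((1 - b) * SBop b c τ φ t)

/-- A wave profile: a nondecreasing `C²` solution of the profile equation that connects `0`
to `1`. -/
structure IsProfile (b c τ : ℝ) (φ : ℝ → ℝ) : Prop where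
  b_mem : b ∈ Ioo (0 : ℝ) 1
  c_pos : 0 < c
  τ_pos : 0 < τ
  mono : Monotone φ
  smooth : ContDiff ℝ 2 φ
  eqn : ∀ t : ℝ, deriv (deriv φ) t - c * deriv φ t
      + Bop b c τ φ t * (1 - (1 - b) * SBop b c τ φ t) = 0
  tendsto_atBot : Tendsto φ atBot (𝓝 0)
  tendsto_atTop : Tendsto φ atTop (𝓝 1)

namespace IsProfile

variable {b c τ : ℝ} {φ : ℝ → ℝ}

lemma b_mem_Ico (P : IsProfile b c τ φ) : b ∈ Ico 0 1 := ⟨P.b_mem.1.le, P.b_mem.2⟩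

lemma one_sub_pos (P : IsProfile b c τ φ) : 0 < 1 - b := sub_pos.2 P.b_mem.2

lemma delay_pos (P : IsProfile b c τ φ) : 0 < c * τ := mul_pos P.c_pos P.τ_pos

lemma nonneg (P : IsProfile b c τ φ) (t : ℝ) : 0 ≤ φ t := P.mono.le_of_tendsto P.tendsto_atBot t

lemma le_one (P : IsProfile b c τ φ) (t : ℝ) : φ t ≤ 1 := P.mono.ge_of_tendsto P.tendsto_atTop t

lemma hasDerivAt (P : IsProfile b c τ φ) (t : ℝ) : HasDerivAt φ (deriv φ t) t :=
  (P.smooth.differentiable (by norm_num) t).hasDerivAt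

lemma hasDerivAt_deriv (P : IsProfile b c τ φ) (t : ℝ) :
    HasDerivAt (deriv φ) (deriv (deriv φ) t) t :=
  (P.smooth.differentiable_deriv_two t).hasDerivAt

lemma deriv_nonneg (P : IsProfile b c τ φ) (t : ℝ) : 0 ≤ deriv φ t := P.mono.deriv_nonneg

lemma self_le_Bop (P : IsProfile b c τ φ) (t : ℝ) : φ t ≤ Bop b c τ φ t :=
  _root_.self_le_Bop P.b_mem_Ico P.delay_pos.le P.mono P.nonneg t

lemma one_sub_mul_Bop_le (P : IsProfile b c τ φ) (t : ℝ) : (1 - b) * Bop b c τ φ t ≤ φ t :=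
  _root_.one_sub_mul_Bop_le P.b_mem_Ico P.delay_pos.le P.mono P.nonneg t

lemma Bop_nonneg (P : IsProfile b c τ φ) (t : ℝ) : 0 ≤ Bop b c τ φ t :=
  (P.nonneg t).trans (P.self_le_Bop t)

lemma Bop_le_inv_mul (P : IsProfile b c τ φ) (t : ℝ) : Bop b c τ φ t ≤ (1 - b)⁻¹ * φ t :=
  (le_inv_mul_iff₀ P.one_sub_pos).2 (P.one_sub_mul_Bop_le t)

lemma Bop_le_inv (P : IsProfile b c τ φ) (t : ℝ) : Bop b c τ φ t ≤ (1 - b)⁻¹ :=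
  (P.Bop_le_inv_mul t).trans (mul_le_of_le_one_right (inv_pos.2 P.one_sub_pos).le (P.le_one t))

lemma continuous_Bop (P : IsProfile b c τ φ) : Continuous (Bop b c τ φ) :=
  _root_.continuous_Bop P.b_mem_Ico
    (fun t => (abs_of_nonneg (P.nonneg t)).trans_le (P.le_one t)) P.smooth.continuous

lemma one_sub_mul_SBop_le (P : IsProfile b c τ φ) (t : ℝ) : (1 - b) * SBop b c τ φ t ≤ φ t := by
  rw [SBop_eq_Bop_sub]
  exact (P.one_sub_mul_Bop_le _).trans (P.mono (sub_le_self t P.delay_pos.le))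

lemma one_sub_mul_SBop_nonneg (P : IsProfile b c τ φ) (t : ℝ) :
    0 ≤ (1 - b) * SBop b c τ φ t := by
  rw [SBop_eq_Bop_sub]
  exact mul_nonneg P.one_sub_pos.le (P.Bop_nonneg _)

lemma one_sub_mul_SBop_lt_one (P : IsProfile b c τ φ) (t : ℝ) :
    (1 - b) * SBop b c τ φ t < 1 := by
  obtain ⟨T, hT⟩ := eventually_atBot.1 (P.tendsto_atBot.eventually_lt_const one_pos)
  obtain ⟨n, hn⟩ := exists_nat_ge ((t - c * τ - T) / (c * τ))
  rw [div_le_iff₀ P.delay_pos] at hn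
  rw [SBop_eq_Bop_sub]
  exact one_sub_mul_Bop_lt_one P.b_mem_Ico P.delay_pos.le P.mono P.nonneg P.b_mem.1 P.le_one n
    (hT _ (by linarith))

lemma reaction_pos (P : IsProfile b c τ φ) {t : ℝ} (ht : 0 < φ t) :
    0 < Bop b c τ φ t * (1 - (1 - b) * SBop b c τ φ t) :=
  mul_pos (ht.trans_le (P.self_le_Bop t)) (sub_pos.2 (P.one_sub_mul_SBop_lt_one t))

lemma reaction_nonneg (P : IsProfile b c τ φ) (t : ℝ) :
    0 ≤ Bop b c τ φ t * (1 - (1 - b) * SBop b c τ φ t) :=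
  mul_nonneg (P.Bop_nonneg t) (sub_nonneg.2 (P.one_sub_mul_SBop_lt_one t).le)

lemma half_le_reaction (P : IsProfile b c τ φ) {t : ℝ} (ht : φ t ≤ 1 / 2) :
    φ t / 2 ≤ Bop b c τ φ t * (1 - (1 - b) * SBop b c τ φ t) := by
  rw [div_eq_mul_one_div]
  exact mul_le_mul (P.self_le_Bop t) (by linarith [P.one_sub_mul_SBop_le t]) (by norm_num)
    (P.Bop_nonneg t)

/-- If `φ'` vanished at `t₀` it would vanish on `[t₀, ∞)`, because `φ' e^{-ct}` is antitone; there
`φ'` would be minimal, so `φ''` would vanish as well and the reaction term with it. -/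
lemma deriv_pos (P : IsProfile b c τ φ) (t₀ : ℝ) : 0 < deriv φ t₀ := by
  refine (P.deriv_nonneg t₀).lt_of_ne' fun h₀ => ?_
  have hanti := antitoneOn_mul_exp_neg_of_deriv_le convex_univ (k := c)
    (fun t _ => P.hasDerivAt_deriv t) fun t _ => by linarith [P.eqn t, P.reaction_nonneg t]
  obtain ⟨t, hφt, ht⟩ :=
    ((P.tendsto_atTop.eventually_const_lt one_pos).and (eventually_ge_atTop t₀)).exists
  have hderiv : deriv φ t = 0 := by
    have h := hanti (mem_univ t₀) (mem_univ t) ht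
    simp only [h₀, zero_mul] at h
    exact (nonpos_of_mul_nonpos_left h (Real.exp_pos _)).antisymm (P.deriv_nonneg t)
  have hmin : IsLocalMin (deriv φ) t :=
    Eventually.of_forall fun s => hderiv.trans_le (P.deriv_nonneg s)
  have heqn := P.eqn t
  rw [hmin.deriv_eq_zero, hderiv] at heqn
  linarith [P.reaction_pos hφt]

lemma pos (P : IsProfile b c τ φ) (t : ℝ) : 0 < φ t :=
  (P.nonneg (t - 1)).trans_lt (strictMono_of_deriv_pos P.deriv_pos (sub_one_lt t))

lemma hasDerivAt_flux (P : IsProfile b c τ φ) (t : ℝ) :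
    HasDerivAt (fun t => c * φ t - deriv φ t)
      (Bop b c τ φ t * (1 - (1 - b) * SBop b c τ φ t)) t :=
  (((P.hasDerivAt t).const_mul c).sub (P.hasDerivAt_deriv t)).congr_deriv (by linarith [P.eqn t])

lemma monotone_flux (P : IsProfile b c τ φ) : Monotone fun t => c * φ t - deriv φ t :=
  monotone_of_hasDerivAt_nonneg P.hasDerivAt_flux P.reaction_nonneg

/-- A negative value of the flux at `t₀` would bound `φ'` away from zero on `(-∞, t₀]`. -/
lemma deriv_le (P : IsProfile b c τ φ) (t₀ : ℝ) : deriv φ t₀ ≤ c * φ t₀ := by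
  by_contra! hlt
  set η := deriv φ t₀ - c * φ t₀
  have hη₀ : 0 < η := sub_pos.2 hlt
  have hge (t : ℝ) (ht : t ≤ t₀) : η ≤ deriv φ t := by
    linarith [P.monotone_flux ht, mul_nonneg P.c_pos.le (P.nonneg t)]
  obtain ⟨x, hx, hslope⟩ := exists_hasDerivAt_eq_slope φ (deriv φ)
    (show t₀ - 2 / η < t₀ from sub_lt_self t₀ (by positivity))
    P.smooth.continuous.continuousOn fun x _ => P.hasDerivAt x
  have hbound := hge x hx.2.le
  rw [hslope, le_div_iff₀ (by simpa using hη₀), sub_sub_cancel, mul_div_cancel₀ _ hη₀.ne'] at hbound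
  linarith [P.nonneg (t₀ - 2 / η), P.le_one t₀]

lemma antitone_mul_exp_neg (P : IsProfile b c τ φ) :
    Antitone fun t => φ t * Real.exp (-(c * t)) :=
  antitoneOn_univ.1 (antitoneOn_mul_exp_neg_of_deriv_le convex_univ (fun t _ => P.hasDerivAt t)
    fun t _ => P.deriv_le t)

/-- Near `-∞` the flux satisfies `F' ≥ φ / 2 ≥ F / (2c)`, so it decays exponentially, and
`φ / 2 ≤ F'` passes the decay on to `φ`. -/
lemma rates_nonempty (P : IsProfile b c τ φ) : (rates φ).Nonempty := by
  have hc := P.c_pos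
  obtain ⟨T, hT⟩ := eventually_atBot.1 (P.tendsto_atBot.eventually_le_const (half_pos one_pos))
  set F := fun t => c * φ t - deriv φ t
  set k := 1 / (2 * c) with hk
  have hFφ (t : ℝ) : k * F t ≤ φ t / 2 := by
    have h : F t ≤ c * φ t := sub_le_self _ (P.deriv_nonneg t)
    rw [hk, one_div_mul_eq_div, div_le_iff₀ (by positivity)]
    linarith
  have hFm : MonotoneOn (fun t => F t * Real.exp (-(k * t))) (Iic T) :=
    monotoneOn_mul_exp_neg_of_le_deriv (convex_Iic T) (fun t _ => P.hasDerivAt_flux t)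
      fun t ht => (hFφ t).trans (P.half_le_reaction (hT t ht))
  have hFexp (t : ℝ) (ht : t ≤ T) : F t ≤ F T * Real.exp (-(k * T)) * Real.exp (k * t) := by
    rw [← div_le_iff₀ (Real.exp_pos _), div_eq_mul_inv, ← Real.exp_neg]
    exact hFm ht self_mem_Iic ht
  refine ⟨k, mem_rates_of_le_on_Iic P.le_one (T := T - 1) (by positivity)
    (C := 2 * (F T * Real.exp (-(k * T)) * Real.exp k)) fun t ht => ?_⟩
  obtain ⟨x, hx, hslope⟩ := exists_hasDerivAt_eq_slope F _ (lt_add_one t)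
    (fun x _ => (P.hasDerivAt_flux x).continuousAt.continuousWithinAt)
    fun x _ => P.hasDerivAt_flux x
  rw [add_sub_cancel_left, div_one] at hslope
  have hFt : 0 ≤ F t := sub_nonneg.2 (P.deriv_le t)
  have hlast := hFexp (t + 1) (by linarith)
  rw [mul_add, mul_one, Real.exp_add] at hlast
  linarith [P.half_le_reaction (hT x (by linarith [hx.2])), P.mono hx.1.le]

lemma le_of_mem_rates (P : IsProfile b c τ φ) {σ : ℝ} (hσ : σ ∈ rates φ) : σ ≤ c := by
  obtain ⟨-, C, hC⟩ := hσ
  by_contra! hlt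
  have hle (t : ℝ) (ht : t ≤ 0) : φ 0 ≤ C * Real.exp ((σ - c) * t) := by
    calc φ 0 = φ 0 * Real.exp (-(c * 0)) := by simp
      _ ≤ φ t * Real.exp (-(c * t)) := P.antitone_mul_exp_neg ht
      _ ≤ C * Real.exp (σ * t) * Real.exp (-(c * t)) :=
          mul_le_mul_of_nonneg_right (hC t) (Real.exp_pos _).le
      _ = C * Real.exp ((σ - c) * t) := by rw [mul_assoc, ← Real.exp_add]; ring_nf
  have hlim := (tendsto_exp_mul_atBot (sub_pos.2 hlt)).const_mul C
  have := ge_of_tendsto hlim ((eventually_le_atBot 0).mono hle)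
  linarith [P.pos 0]

lemma bddAbove_rates (P : IsProfile b c τ φ) : BddAbove (rates φ) :=
  ⟨c, fun _ hσ => P.le_of_mem_rates hσ⟩

lemma le_rate (P : IsProfile b c τ φ) {σ : ℝ} (hσ : σ ∈ rates φ) : σ ≤ rate φ :=
  le_csSup P.bddAbove_rates hσ

lemma rate_pos (P : IsProfile b c τ φ) : 0 < rate φ := by
  obtain ⟨σ, hσ⟩ := P.rates_nonempty
  exact hσ.1.trans_le (P.le_rate hσ)

lemma exists_mem_rates_gt (P : IsProfile b c τ φ) {x : ℝ} (hx : x < rate φ) :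
    ∃ σ ∈ rates φ, x < σ :=
  exists_lt_of_lt_csSup P.rates_nonempty hx

lemma nonlin_nonneg (P : IsProfile b c τ φ) (t : ℝ) : 0 ≤ nonlin b c τ φ t :=
  mul_nonneg (P.Bop_nonneg t) (P.one_sub_mul_SBop_nonneg t)

lemma nonlin_pos (P : IsProfile b c τ φ) (t : ℝ) : 0 < nonlin b c τ φ t := by
  rw [nonlin, SBop_eq_Bop_sub]
  exact mul_pos ((P.pos t).trans_le (P.self_le_Bop t))
    (mul_pos P.one_sub_pos ((P.pos _).trans_le (P.self_le_Bop _)))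

lemma nonlin_le_mul (P : IsProfile b c τ φ) (t : ℝ) :
    nonlin b c τ φ t ≤ Bop b c τ φ t * φ t :=
  mul_le_mul_of_nonneg_left (P.one_sub_mul_SBop_le t) (P.Bop_nonneg t)

lemma nonlin_le_inv (P : IsProfile b c τ φ) (t : ℝ) : nonlin b c τ φ t ≤ (1 - b)⁻¹ :=
  (mul_le_of_le_one_right (P.Bop_nonneg t) (P.one_sub_mul_SBop_lt_one t).le).trans (P.Bop_le_inv t)

lemma continuous_nonlin (P : IsProfile b c τ φ) : Continuous (nonlin b c τ φ) := by
  have hB := P.continuous_Bop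
  have hS : Continuous (SBop b c τ φ) := by
    rw [funext SBop_eq_Bop_sub]
    fun_prop
  unfold nonlin
  fun_prop

section Laplace

variable (P : IsProfile b c τ φ) {z : ℂ} (h₀ : 0 < z.re)
include P h₀

lemma laplaceConvergent_nonlin (hz : z.re < 2 * rate φ) :
    LaplaceConvergent (fun t => (nonlin b c τ φ t : ℂ)) z := by
  obtain ⟨σ, hσ, hzσ⟩ := P.exists_mem_rates_gt (show z.re / 2 < rate φ by linarith)
  exact laplaceConvergent_of_mem_rates P.continuous_nonlin P.nonlin_nonneg P.nonlin_le_inv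
    (add_mem_rates_of_le_mul
      (mem_rates_of_le_const_mul hσ (inv_pos.2 P.one_sub_pos).le P.Bop_le_inv_mul) hσ
      P.Bop_nonneg P.nonneg P.nonlin_le_mul) h₀ (by linarith)

variable (hz : z.re < rate φ)
include hz

lemma laplaceConvergent_self : LaplaceConvergent (fun t => (φ t : ℂ)) z := by
  obtain ⟨σ, hσ, hzσ⟩ := P.exists_mem_rates_gt hz
  exact laplaceConvergent_of_mem_rates P.smooth.continuous P.nonneg P.le_one hσ h₀ hzσ

lemma laplaceConvergent_deriv : LaplaceConvergent (fun t => ((deriv φ t : ℝ) : ℂ)) z := by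
  obtain ⟨σ, hσ, hzσ⟩ := P.exists_mem_rates_gt hz
  exact laplaceConvergent_of_mem_rates (P.smooth.continuous_deriv (by norm_num)) P.deriv_nonneg
    (fun t => (P.deriv_le t).trans (mul_le_of_le_one_right P.c_pos.le (P.le_one t)))
    (mem_rates_of_le_const_mul hσ P.c_pos.le P.deriv_le) h₀ hzσ

lemma laplaceConvergent_Bop : LaplaceConvergent (fun t => (Bop b c τ φ t : ℂ)) z := by
  obtain ⟨σ, hσ, hzσ⟩ := P.exists_mem_rates_gt hz
  exact laplaceConvergent_of_mem_rates P.continuous_Bop P.Bop_nonneg P.Bop_le_inv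
    (mem_rates_of_le_const_mul hσ (inv_pos.2 P.one_sub_pos).le P.Bop_le_inv_mul) h₀ hzσ

lemma chiC_mul_laplace : chiC b c τ z * laplace (fun t => (φ t : ℂ)) z =
    laplace (fun t => (nonlin b c τ φ t : ℂ)) z := by
  have hφ := P.laplaceConvergent_self h₀ hz
  have hφ' := P.laplaceConvergent_deriv h₀ hz
  have hB := P.laplaceConvergent_Bop h₀ hz
  have hN := P.laplaceConvergent_nonlin h₀ (by linarith [P.rate_pos])
  have heqn : (fun t => ((deriv (deriv φ) t : ℝ) : ℂ)) =
      fun t => (c * ((deriv φ t : ℝ) : ℂ) - Bop b c τ φ t : ℂ) + nonlin b c τ φ t := by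
    ext t
    have h : deriv (deriv φ) t = c * deriv φ t - Bop b c τ φ t + nonlin b c τ φ t := by
      rw [nonlin]
      linarith [P.eqn t]
    exact_mod_cast h
  have hcB := (hφ'.const_mul (c : ℂ)).sub hB
  have hφ'' : LaplaceConvergent (fun t => ((deriv (deriv φ) t : ℝ) : ℂ)) z := heqn ▸ hcB.add hN
  have hderiv := laplace_deriv (fun t => (P.hasDerivAt t).ofReal_comp) hφ hφ'
  have hderiv₂ := laplace_deriv (fun t => (P.hasDerivAt_deriv t).ofReal_comp) hφ' hφ''
  rw [heqn, laplace_add hcB hN, laplace_sub (hφ'.const_mul (c : ℂ)) hB, laplace_const_mul,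
    hderiv] at hderiv₂
  have hdelay := laplace_eq_mul_laplace_Bop P.b_mem_Ico P.delay_pos.le P.mono P.nonneg hB
  have hsymbol : 1 / (1 - b * Complex.exp (-(z * c * τ))) * laplace (fun t => (φ t : ℂ)) z
      = laplace (fun t => (Bop b c τ φ t : ℂ)) z := by
    rw [hdelay, one_div, inv_mul_cancel_left₀
      (one_sub_mul_cexp_ne_zero P.b_mem_Ico P.delay_pos.le h₀.le)]
  rw [chiC, add_mul, hsymbol]
  linear_combination -hderiv₂

end Laplace

end IsProfile

/-! ### The rate of a profile is a zero of the characteristic function -/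

lemma integral_mul_exp_neg_pos {f : ℝ → ℝ} {x : ℝ} (hf : ∀ t, 0 < f t)
    (h : LaplaceConvergent (fun t => (f t : ℂ)) x) : 0 < ∫ t, f t * Real.exp (-(x * t)) := by
  have hpos (t : ℝ) : 0 < f t * Real.exp (-(x * t)) := mul_pos (hf t) (Real.exp_pos _)
  rw [integral_pos_iff_support_of_nonneg (fun t => (hpos t).le) (laplaceConvergent_ofReal_iff.1 h),
    Function.support_eq_univ fun t => (hpos t).ne']
  simp

namespace IsProfile

variable {b c τ : ℝ} {φ : ℝ → ℝ}

lemma exists_laplace_nonlin_eq_ofReal (P : IsProfile b c τ φ) {x : ℝ}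
    (hx : x ∈ Ioo 0 (2 * rate φ)) :
    ∃ N : ℝ, 0 < N ∧ laplace (fun t => (nonlin b c τ φ t : ℂ)) x = N :=
  ⟨_, integral_mul_exp_neg_pos P.nonlin_pos
    (P.laplaceConvergent_nonlin (by simpa using hx.1) (by simpa using hx.2)), laplace_ofReal _ _⟩

lemma differentiableAt_laplace_nonlin (P : IsProfile b c τ φ) {z : ℂ}
    (hz : z.re ∈ Ioo 0 (2 * rate φ)) :
    DifferentiableAt ℂ (laplace fun t => (nonlin b c τ φ t : ℂ)) z := by
  refine differentiableAt_laplace P.continuous_nonlin.measurable P.nonlin_nonneg ?_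
  filter_upwards [isOpen_Ioo.mem_nhds hz] with x hx
  exact P.laplaceConvergent_nonlin (by simpa using hx.1) (by simpa using hx.2)

lemma chi0_pos (P : IsProfile b c τ φ) {x : ℝ} (hx₀ : 0 < x) (hx : x < rate φ) :
    0 < chi0 b c τ x := by
  have heq := P.chiC_mul_laplace (z := x) (by simpa) (by simpa)
  obtain ⟨N, hN, hNeq⟩ := P.exists_laplace_nonlin_eq_ofReal ⟨hx₀, by linarith⟩
  rw [chiC_ofReal, laplace_ofReal, hNeq] at heq
  refine pos_of_mul_pos_left (hN.trans_eq (by exact_mod_cast heq.symm)) ?_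
  exact integral_nonneg fun t => mul_nonneg (P.nonneg t) (Real.exp_pos _).le

/-- Otherwise `laplace (nonlin φ) / χ₀` would continue `laplace φ` holomorphically to a disc
centred to the left of `rate φ` and reaching beyond it, and by Landau's theorem `φ` would have an
exponential rate larger than `rate φ`. -/
lemma chi0_rate (P : IsProfile b c τ φ) : chi0 b c τ (rate φ) = 0 := by
  by_contra hne
  have hl := P.rate_pos
  obtain ⟨r, hr, hball⟩ := Metric.eventually_nhds_iff_ball.1
    ((differentiableAt_chiC P.b_mem_Ico P.delay_pos.le (z := rate φ)
      (by simpa using hl.le)).continuousAt.eventually_ne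
      (show chiC b c τ (rate φ) ≠ 0 by rw [chiC_ofReal]; exact_mod_cast hne))
  set δ := min r (rate φ) / 4 with hδ
  have hδ₀ : 0 < δ := by positivity
  have hδr : 4 * δ ≤ r := by linarith [min_le_left r (rate φ)]
  have hδl : 4 * δ ≤ rate φ := by linarith [min_le_right r (rate φ)]
  have hdisc {z : ℂ} (hz : z ∈ Metric.ball ((rate φ - δ : ℝ) : ℂ) (3 * δ)) :
      z.re ∈ Ioo 0 (2 * rate φ) ∧ chiC b c τ z ≠ 0 := by
    have hdist : dist z (rate φ) < 4 * δ := by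
      have := dist_triangle z ((rate φ - δ : ℝ) : ℂ) (rate φ)
      have : dist ((rate φ - δ : ℝ) : ℂ) (rate φ) = δ := by simp [abs_of_pos hδ₀]
      linarith [Metric.mem_ball.1 hz]
    have hre := abs_lt.1 ((Complex.abs_re_le_norm (z - rate φ)).trans_lt (dist_eq_norm z _ ▸ hdist))
    rw [Complex.sub_re, Complex.ofReal_re] at hre
    exact ⟨⟨by linarith, by linarith⟩, hball z (Metric.mem_ball.2 (by linarith))⟩
  have hconv : LaplaceConvergent (fun t => (φ t : ℂ)) ((rate φ - δ + 2 * δ : ℝ) : ℂ) := by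
    refine LaplaceConvergent.add_of_differentiableOn_ball (r := 3 * δ)
      (G := fun z => laplace (fun t => (nonlin b c τ φ t : ℂ)) z / chiC b c τ z)
      P.smooth.continuous.measurable P.nonneg ?_ (fun z hz => ?_) ?_
      (by rw [abs_of_pos (by positivity)]; linarith)
    · filter_upwards [Ioo_mem_nhds (show 0 < rate φ - δ by linarith) (sub_lt_self _ hδ₀)] with x hx
      exact P.laplaceConvergent_self (by simpa using hx.1) (by simpa using hx.2)
    · have hz' := hdisc hz
      exact ((P.differentiableAt_laplace_nonlin hz'.1).div (differentiableAt_chiC P.b_mem_Ico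
        P.delay_pos.le hz'.1.1.le) hz'.2).differentiableWithinAt
    · filter_upwards [Metric.ball_mem_nhds _ (show 0 < 3 * δ by positivity),
        (isOpen_Iio.preimage Complex.continuous_re).mem_nhds
          (show ((rate φ - δ : ℝ) : ℂ).re < rate φ from sub_lt_self _ hδ₀)] with z hz hzl
      rw [← P.chiC_mul_laplace (hdisc hz).1.1 hzl, mul_div_cancel_left₀ _ (hdisc hz).2]
  have := P.le_rate (mem_rates_of_laplaceConvergent P.mono P.nonneg (by linarith) hconv)
  linarith

lemma rate_le_of_chi0_eq_zero (P : IsProfile b c τ φ) {x : ℝ} (hx : 0 < x)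
    (h : chi0 b c τ x = 0) : rate φ ≤ x :=
  not_lt.1 fun hlt => (P.chi0_pos hx hlt).ne' h

lemma deriv_chi0_rate_nonpos (P : IsProfile b c τ φ) : deriv (chi0 b c τ) (rate φ) ≤ 0 := by
  have hslope := (hasDerivAt_iff_tendsto_slope.1
    (hasDerivAt_chi0 P.b_mem_Ico P.delay_pos.le P.rate_pos.le)).mono_left (nhdsLT_le_nhdsNE _)
  refine le_of_tendsto hslope ?_
  filter_upwards [Ioo_mem_nhdsLT P.rate_pos] with x hx
  rw [slope_def_field, P.chi0_rate, sub_zero]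
  exact div_nonpos_of_nonneg_of_nonpos (P.chi0_pos hx.1 hx.2).le (sub_nonpos.2 hx.2.le)

end IsProfile

/-! ### Expansion of a profile -/

namespace IsProfile

variable {b c τ : ℝ} {φ : ℝ → ℝ}

lemma chiC_ne_zero_of_re_eq_rate (P : IsProfile b c τ φ) {z : ℂ} (hz : z.re = rate φ)
    (hne : z ≠ rate φ) : chiC b c τ z ≠ 0 := fun h =>
  hne (eq_ofReal_of_chiC_eq_zero P.b_mem_Ico P.delay_pos.le P.rate_pos P.chi0_rate hz h)

lemma half_sq_le_norm_chiC (P : IsProfile b c τ φ) {z : ℂ} (hz : 0 < z.re)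
    (him : 2 / (1 - b) ≤ |z.im|) : z.im ^ 2 / 2 ≤ ‖chiC b c τ z‖ := by
  refine _root_.half_sq_le_norm_chiC P.b_mem_Ico P.delay_pos.le hz.le ?_
  have hone : 1 ≤ 2 / (1 - b) := (one_le_div P.one_sub_pos).2 (by linarith [P.b_mem.1])
  rw [← sq_abs, sq]
  exact him.trans (le_mul_of_one_le_left (abs_nonneg _) (hone.trans him))

lemma norm_sub_rate_sq_le (P : IsProfile b c τ φ) {z : ℂ} (hz : 0 < z.re)
    (hzl : |z.re - rate φ| ≤ 1) (him : 2 / (1 - b) ≤ |z.im|) :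
    ‖(z - rate φ) ^ 2‖ ≤ 4 * ‖chiC b c τ z‖ := by
  have hone : 1 ≤ |z.im| :=
    ((one_le_div P.one_sub_pos).2 (by linarith [P.b_mem.1])).trans him
  have hnorm : ‖(z - rate φ) ^ 2‖ = (z.re - rate φ) ^ 2 + z.im ^ 2 := by
    rw [norm_pow, Complex.sq_norm, Complex.normSq_apply]
    simp [sq]
  rw [hnorm]
  linarith [P.half_sq_le_norm_chiC hz him, (sq_le_one_iff_abs_le_one _).2 hzl,
    (one_le_sq_iff_one_le_abs z.im).2 hone]

lemma chiC_ne_zero_of_le_abs_im (P : IsProfile b c τ φ) {z : ℂ} (hz : 0 < z.re)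
    (him : 2 / (1 - b) ≤ |z.im|) : chiC b c τ z ≠ 0 := by
  have hpos : 0 < |z.im| := (div_pos two_pos P.one_sub_pos).trans_le him
  exact norm_pos_iff.1 ((half_pos (pow_pos hpos 2)).trans_le
    (by simpa only [sq_abs] using P.half_sq_le_norm_chiC hz him))

lemma exists_norm_laplace_nonlin_le (P : IsProfile b c τ φ) {δ : ℝ} (hδ : δ < rate φ) :
    ∃ K, ∀ z : ℂ, z.re ∈ Icc (rate φ - δ) (rate φ + δ) →
      ‖laplace (fun t => (nonlin b c τ φ t : ℂ)) z‖ ≤ K :=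
  ⟨_, fun z hz => by
    have hlt := hz.1.trans hz.2
    exact norm_laplace_le_add (P.laplaceConvergent_nonlin (by simpa using hδ) (by simp; linarith))
      (P.laplaceConvergent_nonlin (by simp; linarith) (by simp; linarith)) hz⟩

section Factor

variable {q H : ℂ → ℂ} (hq₀ : ∀ z : ℂ, z ≠ rate φ → q z ≠ 0)
  (hH : ∀ z : ℂ, 0 < z.re → DifferentiableAt ℂ H z) (hH₀ : H (rate φ) ≠ 0)
  (hfactor : ∀ z : ℂ, chiC b c τ z * q z = (z - rate φ) ^ 2 * H z)
include hq₀ hH hH₀ hfactor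

lemma exists_strip_ne_zero (P : IsProfile b c τ φ) :
    ∃ δ ∈ Ioo 0 1, δ < rate φ ∧ ∀ z : ℂ, z.re ∈ Icc (rate φ - δ) (rate φ + δ) → H z ≠ 0 := by
  have hl := P.rate_pos
  have hne {z : ℂ} (hzl : z ≠ rate φ) (hz : chiC b c τ z ≠ 0) : H z ≠ 0 :=
    right_ne_zero_of_mul (hfactor z ▸ mul_ne_zero hz (hq₀ z hzl))
  have hline : ∀ᶠ x in 𝓝 (rate φ), ∀ z : ℂ, z.re = x → H z ≠ 0 := by
    refine eventually_forall_re_eq_ne_zero (Y := 2 / (1 - b))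
      (fun z hz => (hH z (hz ▸ hl)).continuousAt) (fun z hz => ?_) ?_
    · by_cases hzl : z = rate φ
      · exact hzl ▸ hH₀
      · exact hne hzl (P.chiC_ne_zero_of_re_eq_rate hz hzl)
    · filter_upwards [lt_mem_nhds hl] with x hx z hz him
      refine hne (fun hzl => ?_) (P.chiC_ne_zero_of_le_abs_im (hz ▸ hx) him)
      rw [hzl, Complex.ofReal_im, abs_zero] at him
      exact him.not_gt (div_pos two_pos P.one_sub_pos)
  obtain ⟨r, hr, hball⟩ := Metric.nhds_basis_closedBall.eventually_iff.1 hline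
  refine ⟨min r (min (rate φ / 2) (1 / 2)), ⟨by positivity, ?_⟩, ?_, fun z hz => hball ?_ z rfl⟩
  · exact ((min_le_right _ _).trans (min_le_right _ _)).trans_lt (by norm_num)
  · exact ((min_le_right _ _).trans (min_le_left _ _)).trans_lt (half_lt_self hl)
  · rw [Real.closedBall_eq_Icc]
    exact Icc_subset_Icc (sub_le_sub_left (min_le_left _ _) _)
      (add_le_add_right (min_le_left _ _) _) hz

/-- Multiplying the transformed equation by `q` gives `(z - rate φ)² laplace φ = E`, where `E`
is holomorphic across the line `re z = rate φ`. -/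
lemma exists_expansion (P : IsProfile b c τ φ) (hq : Differentiable ℂ q) {E : ℂ → ℂ}
    (hE : ∀ z, E z = q z * laplace (fun t => (nonlin b c τ φ t : ℂ)) z / H z) :
    ∃ δ > 0, ∃ C, ∀ t ≤ 0, |φ t - (-(deriv E (rate φ)).re - (E (rate φ)).re * t) *
      Real.exp (rate φ * t)| ≤ C * Real.exp ((rate φ + δ) * t) := by
  obtain ⟨δ, ⟨hδ₀, hδ₁⟩, hδ, hne⟩ := P.exists_strip_ne_zero hq₀ hH hH₀ hfactor
  have hstrip {z : ℂ} (hz : z.re ∈ Icc (rate φ - δ) (rate φ + δ)) :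
      z.re ∈ Ioo 0 (2 * rate φ) := ⟨by linarith [hz.1], by linarith [hz.2]⟩
  have hdiff : DifferentiableOn ℂ E {z | z.re ∈ Icc (rate φ - δ) (rate φ + δ)} := by
    rw [funext hE]
    exact fun z hz => (((hq z).mul (P.differentiableAt_laplace_nonlin (hstrip hz))).div
      (hH z (hstrip hz).1) (hne z hz)).differentiableWithinAt
  have hlap (z : ℂ) (hz : z.re = rate φ - δ) :
      (z - rate φ) ^ 2 * laplace (fun t => (φ t : ℂ)) z = E z := by
    rw [hE, eq_div_iff (hne z ⟨hz.ge, by linarith⟩), ← P.chiC_mul_laplace (by linarith)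
      (by linarith)]
    linear_combination -laplace (fun t => (φ t : ℂ)) z * hfactor z
  obtain ⟨K, hK⟩ := P.exists_norm_laplace_nonlin_le hδ
  have hbound (z : ℂ) (hz : z.re ∈ Icc (rate φ - δ) (rate φ + δ)) (him : 2 / (1 - b) ≤ |z.im|) :
      ‖E z‖ ≤ 4 * K := by
    have hχ := P.chiC_ne_zero_of_le_abs_im (hstrip hz).1 him
    have hEχ : E z = (z - rate φ) ^ 2 / chiC b c τ z *
        laplace (fun t => (nonlin b c τ φ t : ℂ)) z := by
      rw [hE, div_mul_eq_mul_div, div_eq_div_iff (hne z hz) hχ]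
      linear_combination laplace (fun t => (nonlin b c τ φ t : ℂ)) z * hfactor z
    rw [hEχ, norm_mul, norm_div]
    exact mul_le_mul ((div_le_iff₀ (norm_pos_iff.2 hχ)).2 (P.norm_sub_rate_sq_le (hstrip hz).1
      (abs_le.2 ⟨by linarith [hz.1], by linarith [hz.2]⟩) him)) (hK z hz) (norm_nonneg _)
      (by norm_num)
  obtain ⟨C, hC⟩ := exists_norm_sub_poleModel_le
    (Complex.continuous_ofReal.comp P.smooth.continuous) hδ₀ hδ₁ hdiff
    (fun z hz => P.laplaceConvergent_self (by linarith) (by linarith)) hlap hbound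
  obtain ⟨C, hC⟩ := exists_expansion_of_norm_sub_poleModel_le hδ₁ hC
  refine ⟨δ, hδ₀, C, fun t ht => ((Complex.abs_re_le_norm _).trans (hC t ht)).trans_eq' ?_⟩
  have hexp : Complex.exp (rate φ * t) = (Real.exp (rate φ * t) : ℝ) := by push_cast; rfl
  rw [hexp, Function.comp_apply, Complex.sub_re, Complex.ofReal_re, Complex.re_mul_ofReal,
    Complex.sub_re, Complex.re_mul_ofReal, Complex.neg_re]

end Factor

end IsProfile

/-! ### Simple and double characteristic zeros -/

lemma isOpen_re_pos : IsOpen {z : ℂ | 0 < z.re} :=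
  isOpen_lt continuous_const Complex.continuous_re

lemma hasDerivAt_sub_mul_div {L H : ℂ → ℂ} {w : ℂ} (hL : DifferentiableAt ℂ L w)
    (hH : DifferentiableAt ℂ H w) (hne : H w ≠ 0) :
    HasDerivAt (fun z => (z - w) * L z / H z) (L w / H w) w := by
  refine ((((hasDerivAt_id' w).sub_const w).fun_mul hL.hasDerivAt).fun_div
    hH.hasDerivAt hne).congr_deriv ?_
  field_simp
  ring

namespace IsProfile

variable {b c τ : ℝ} {φ : ℝ → ℝ}

lemma chiC_rate (P : IsProfile b c τ φ) : chiC b c τ (rate φ) = 0 := by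
  rw [chiC_ofReal, P.chi0_rate, Complex.ofReal_zero]

lemma differentiableAt_chiC_of_re_pos (P : IsProfile b c τ φ) (z : ℂ) (hz : 0 < z.re) :
    DifferentiableAt ℂ (chiC b c τ) z :=
  differentiableAt_chiC P.b_mem_Ico P.delay_pos.le hz.le

lemma deriv_chiC_rate (P : IsProfile b c τ φ) :
    deriv (chiC b c τ) (rate φ) = (deriv (chi0 b c τ) (rate φ) : ℝ) :=
  (hasDerivAt_chiC P.b_mem_Ico P.delay_pos.le P.rate_pos.le).deriv

lemma exists_expansion_of_deriv_neg (P : IsProfile b c τ φ)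
    (hD : deriv (chi0 b c τ) (rate φ) < 0) :
    ∃ A > 0, ∃ δ > 0, ∃ C, ∀ t ≤ 0, |φ t - A * Real.exp (rate φ * t)| ≤
      C * Real.exp ((rate φ + δ) * t) := by
  have hl := P.rate_pos
  have hH := differentiableAt_dslope isOpen_re_pos (w := rate φ) (by simpa)
    P.differentiableAt_chiC_of_re_pos
  have hHl : dslope (chiC b c τ) (rate φ) (rate φ) = (deriv (chi0 b c τ) (rate φ) : ℝ) :=
    (dslope_same _ _).trans P.deriv_chiC_rate
  have hne : dslope (chiC b c τ) (rate φ) (rate φ) ≠ 0 := by rw [hHl]; exact_mod_cast hD.ne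
  obtain ⟨N, hN, hNl⟩ := P.exists_laplace_nonlin_eq_ofReal ⟨hl, by linarith⟩
  obtain ⟨δ, hδ, C, hC⟩ := exists_expansion (q := fun z => z - rate φ)
    (fun z => sub_ne_zero.2) hH hne
    (fun z => by rw [eq_sub_mul_dslope P.chiC_rate z]; ring) P (by fun_prop) fun z => rfl
  have hderiv := hasDerivAt_sub_mul_div
    (P.differentiableAt_laplace_nonlin (z := rate φ) ⟨by simpa, by simp; linarith⟩)
    (hH _ (by simpa)) hne
  rw [hNl, hHl, ← Complex.ofReal_div] at hderiv
  rw [hderiv.deriv] at hC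
  exact ⟨_, neg_pos.2 (div_neg_of_pos_of_neg hN hD), δ, hδ, C, by simpa using hC⟩

lemma exists_expansion_of_deriv_eq_zero (P : IsProfile b c τ φ)
    (hD : deriv (chi0 b c τ) (rate φ) = 0) :
    ∃ A, ∃ B > 0, ∃ δ > 0, ∃ C, ∀ t ≤ 0, |φ t - (A - B * t) * Real.exp (rate φ * t)| ≤
      C * Real.exp ((rate φ + δ) * t) := by
  have hl := P.rate_pos
  set H := dslope (dslope (chiC b c τ) (rate φ)) (rate φ)
  have hmem : (rate φ : ℂ) ∈ {z : ℂ | 0 < z.re} := by simpa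
  have hH := differentiableAt_dslope isOpen_re_pos hmem
    (differentiableAt_dslope isOpen_re_pos hmem P.differentiableAt_chiC_of_re_pos)
  have hχ' : deriv (chiC b c τ) (rate φ) = 0 := by
    rw [P.deriv_chiC_rate, hD, Complex.ofReal_zero]
  have hre : 1 ≤ (H (rate φ)).re := one_le_re_dslope_dslope (chiC_ofReal b c τ)
    ((isOpen_re_pos.eventually_mem hmem).mono P.differentiableAt_chiC_of_re_pos) P.chiC_rate hχ'
    fun x hx => sq_le_chi0 P.b_mem_Ico P.delay_pos.le hl P.chi0_rate hD (hl.trans hx).le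
  have hne : H (rate φ) ≠ 0 := fun h => by norm_num [h] at hre
  obtain ⟨N, hN, hNl⟩ := P.exists_laplace_nonlin_eq_ofReal ⟨hl, by linarith⟩
  obtain ⟨δ, hδ, C, hC⟩ := exists_expansion (q := 1) (fun _ _ => one_ne_zero) hH hne
    (fun z => by rw [eq_sub_sq_mul_dslope_dslope P.chiC_rate hχ' z, Pi.one_apply, mul_one]) P
    (differentiable_const 1) fun z => rfl
  refine ⟨_, _, ?_, δ, hδ, C, hC⟩
  rw [Pi.one_apply, one_mul, hNl, div_eq_mul_inv, Complex.re_ofReal_mul, Complex.inv_re]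
  exact mul_pos hN (div_pos (by linarith) (Complex.normSq_pos.2 hne))

/-- The shift `s` is chosen so that the leading coefficient `A` satisfies `A * exp (l * s) = 1`. -/
lemma exists_isLittleO_sub_one (P : IsProfile b c τ φ)
    (hD : deriv (chi0 b c τ) (rate φ) < 0) :
    ∃ ε > 0, ∃ s, (fun t => φ (t + s) * Real.exp (-(rate φ * t)) - 1)
      =o[atBot] fun t => Real.exp (ε * t) := by
  obtain ⟨A, hA, δ, hδ, C, hC⟩ := P.exists_expansion_of_deriv_neg hD
  have h := isLittleO_of_expansion (B := 0) hδ (by simpa using hC) (-Real.log A / rate φ)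
  rw [mul_div_cancel₀ _ P.rate_pos.ne', Real.exp_neg, Real.exp_log hA] at h
  exact ⟨δ / 2, half_pos hδ, _, by simpa [hA.ne'] using h⟩

lemma exists_isLittleO_sub_neg_add (P : IsProfile b c τ φ)
    (hD : deriv (chi0 b c τ) (rate φ) = 0) :
    ∃ ε > 0, ∃ s d, (fun t => φ (t + s) * Real.exp (-(rate φ * t)) - (-t + d))
      =o[atBot] fun t => Real.exp (ε * t) := by
  obtain ⟨A, B, hB, δ, hδ, C, hC⟩ := P.exists_expansion_of_deriv_eq_zero hD
  set s := -Real.log B / rate φ with hs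
  have h := isLittleO_of_expansion hδ hC s
  have hexp : Real.exp (rate φ * s) = B⁻¹ := by
    rw [hs, mul_div_cancel₀ _ P.rate_pos.ne', Real.exp_neg, Real.exp_log hB]
  refine ⟨δ / 2, half_pos hδ, s, A / B - s, h.congr_left fun t => ?_⟩
  rw [hexp]
  field_simp
  ring

end IsProfile

/-- A nondecreasing non-constant bounded `C²` solution of the profile
equation `φ'' − cφ' + (Bφ)(1 − (1−b)(SBφ)) = 0` with `φ(−∞)=0`, `φ(+∞)=1` has a strictly
positive derivative; moreover `χ₀` has positive zeros `λ₂ ≤ λ₁` (with `λ₂` minimal) and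
`φ(t+t_a) = e^{λ₂t}((−t)^j + j·d + o(e^{εt}))` as `t → −∞`, where `j = 0` if `λ₂ < λ₁`
and `j = 1` if `λ₂ = λ₁`. -/
theorem profile_asymptotics (b c τ : ℝ) (hb : b ∈ Set.Ioo (0 : ℝ) 1)
    (hc : 0 < c) (hτ : 0 < τ) (φ : ℝ → ℝ)
    (hmono : Monotone φ) (hnc : ∃ s t : ℝ, φ s ≠ φ t)
    (hbdd : ∃ C : ℝ, ∀ t, |φ t| ≤ C)
    (hsm : ContDiff ℝ 2 φ)
    (heq : ∀ t : ℝ, deriv (deriv φ) t - c * deriv φ t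
      + Bop b c τ φ t * (1 - (1 - b) * SBop b c τ φ t) = 0)
    (h0 : Tendsto φ atBot (nhds 0)) (h1 : Tendsto φ atTop (nhds 1)) :
    (∀ t : ℝ, 0 < deriv φ t) ∧
    ∃ l₂ l₁ : ℝ, 0 < l₂ ∧ l₂ ≤ l₁ ∧ chi0 b c τ l₂ = 0 ∧ chi0 b c τ l₁ = 0 ∧
      (∀ z : ℝ, 0 < z → chi0 b c τ z = 0 → l₂ ≤ z) ∧
      ∃ ε > (0 : ℝ), ∃ ta d : ℝ,
        (l₂ < l₁ →
          (fun t => φ (t + ta) * Real.exp (-(l₂ * t)) - 1)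
            =o[atBot] fun t => Real.exp (ε * t)) ∧
        (l₂ = l₁ →
          (fun t => φ (t + ta) * Real.exp (-(l₂ * t)) - (-t + d))
            =o[atBot] fun t => Real.exp (ε * t)) := by
  have P : IsProfile b c τ φ := ⟨hb, hc, hτ, hmono, hsm, heq, h0, h1⟩
  refine ⟨P.deriv_pos, rate φ, ?_⟩
  have hmin (z : ℝ) (hz : 0 < z) (hz₀ : chi0 b c τ z = 0) := P.rate_le_of_chi0_eq_zero hz hz₀
  rcases P.deriv_chi0_rate_nonpos.lt_or_eq with hD | hD
  · obtain ⟨l₁, hlt, hl₁⟩ :=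
      exists_gt_chi0_eq_zero P.b_mem_Ico P.delay_pos.le P.rate_pos P.chi0_rate hD
    obtain ⟨ε, hε, s, h⟩ := P.exists_isLittleO_sub_one hD
    exact ⟨l₁, P.rate_pos, hlt.le, P.chi0_rate, hl₁, hmin, ε, hε, s, 0, fun _ => h,
      fun hl => absurd hl hlt.ne⟩
  · obtain ⟨ε, hε, s, d, h⟩ := P.exists_isLittleO_sub_neg_add hD
    exact ⟨rate φ, P.rate_pos, le_rfl, P.chi0_rate, P.chi0_rate, hmin, ε, hε, s, d,
      fun hlt => absurd hlt (lt_irrefl _), fun _ => h⟩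
end

section
/- Let b ∈ (0,1) and (τ,c) ∈ 𝔇. Then there exists a continuous, strictly negative, Lebesgue-integrable function N : ℝ → (−∞,0) such that for every bounded continuous f : ℝ → ℝ, the function φ(t) = ∫_ℝ N(t−s)·f(s) ds is the unique bounded, twice continuously differentiable solution with bounded derivatives of the equation φ''(t) − c·φ'(t) − (SBφ)(t) = f(t) for all t ∈ ℝ, where (SBφ)(t) = Σ_{j≥0} b^j·φ(t − (j+1)·c·τ). In other words, the operator 𝒟φ = φ'' − c·φ' − SBφ has an inverse integral operator with negative kernel. -/
open Filter MeasureTheory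

/-- Characteristic function χ₁(z) = z² − c·z − e^{−z·c·τ}/(1 − b·e^{−z·c·τ}). -/
noncomputable def chi1 (b c τ z : ℝ) : ℝ :=
  z ^ 2 - c * z - Real.exp (-(z * c * τ)) / (1 - b * Real.exp (-(z * c * τ)))

/-- The domain 𝔇: χ₀ has a positive real zero and χ₁ has a negative real zero. -/
def inD (b τ c : ℝ) : Prop :=
  (∃ z > (0 : ℝ), chi0 b c τ z = 0) ∧ (∃ z < (0 : ℝ), chi1 b c τ z = 0)

/-!
Let `α < 0` be a zero of `chi1 b c τ`, let `γ = c - α` and write `S` for `SBop b c τ`. In terms of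
the positive Green kernel `H` of `-(∂ - α)(∂ - γ)`, bounded solutions of `φ'' - c φ' - S φ = f` are
the bounded solutions of `φ = H ⋆ (-αγ φ - S φ - f)`, that is, of `φ = p ⋆ φ - H ⋆ f` with
`p = -αγ H - S H`.

Shifting `H` to the right by `r ≥ 0` costs at most a factor `exp (-α r)`, and `chi1 b c τ α = 0`
says that these factors, weighted as in `S`, sum to `-αγ`; hence `p ≥ 0`. Since `∫ H = (-αγ)⁻¹`, the
mass of `p` is `1 - (1 - b)⁻¹ / (-αγ) < 1`. The Neumann series `ρ = p + p ⋆ p + ⋯` therefore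
converges to a nonnegative integrable function, and the inverse kernel is `-(H + ρ ⋆ H)`.
-/

open scoped Convolution

/-- `g` is continuous and `|g| ≤ C`. The bound is a parameter, and not an existential quantifier,
so that it can be followed along a series of functions. -/
structure ContinuousBoundedBy (g : ℝ → ℝ) (C : ℝ) : Prop where
  continuous : Continuous g
  abs_le : ∀ t, |g t| ≤ C

namespace ContinuousBoundedBy

variable {f g : ℝ → ℝ} {C D : ℝ}

lemma const_smul (hg : ContinuousBoundedBy g C) (a : ℝ) :
    ContinuousBoundedBy (a • g) (|a| * C) :=
  ⟨hg.continuous.const_smul a, fun t =>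
    (abs_mul a (g t)).trans_le (mul_le_mul_of_nonneg_left (hg.abs_le t) (abs_nonneg a))⟩

lemma neg (hg : ContinuousBoundedBy g C) : ContinuousBoundedBy (-g) C :=
  ⟨hg.continuous.neg, fun t => (abs_neg (g t)).trans_le (hg.abs_le t)⟩

lemma add (hf : ContinuousBoundedBy f C) (hg : ContinuousBoundedBy g D) :
    ContinuousBoundedBy (f + g) (C + D) :=
  ⟨hf.continuous.add hg.continuous, fun t =>
    (abs_add_le (f t) (g t)).trans (add_le_add (hf.abs_le t) (hg.abs_le t))⟩

lemma sub (hf : ContinuousBoundedBy f C) (hg : ContinuousBoundedBy g D) :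
    ContinuousBoundedBy (f - g) (C + D) :=
  sub_eq_add_neg f g ▸ hf.add hg.neg

lemma norm (hg : ContinuousBoundedBy g C) : ContinuousBoundedBy (fun t => ‖g t‖) C :=
  ⟨hg.continuous.norm, fun t => (abs_abs (g t)).trans_le (hg.abs_le t)⟩

lemma comp (hg : ContinuousBoundedBy g C) {σ : ℝ → ℝ} (hσ : Continuous σ) :
    ContinuousBoundedBy (fun t => g (σ t)) C :=
  ⟨hg.continuous.comp hσ, fun t => hg.abs_le (σ t)⟩

lemma tsum {ι : Type*} {G : ι → ℝ → ℝ} {K : ι → ℝ} (hG : ∀ i, ContinuousBoundedBy (G i) (K i))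
    (hK : Summable K) : ContinuousBoundedBy (fun t => ∑' i, G i t) (∑' i, K i) :=
  ⟨continuous_tsum (fun i => (hG i).continuous) hK fun i => (hG i).abs_le,
    fun t => tsum_of_norm_bounded (f := fun i => G i t) hK.hasSum fun i => (hG i).abs_le t⟩

lemma integrable_mul {μ : Measure ℝ} (hg : ContinuousBoundedBy g C) (hf : Integrable f μ) :
    Integrable (fun s => f s * g s) μ :=
  hf.mul_bdd hg.continuous.aestronglyMeasurable (Eventually.of_forall hg.abs_le)

lemma integral_abs_mul_le {μ : Measure ℝ} (hg : ContinuousBoundedBy g C) (hf : Integrable f μ) :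
    ∫ s, |f s * g s| ∂μ ≤ (∫ s, |f s| ∂μ) * C := by
  rw [← integral_mul_const]
  refine integral_mono (hg.integrable_mul hf).abs (hf.abs.mul_const C) fun s => ?_
  simpa only [abs_mul] using mul_le_mul_of_nonneg_left (hg.abs_le s) (abs_nonneg (f s))

lemma convolutionExists (hg : ContinuousBoundedBy g C) (hf : Integrable f) :
    ConvolutionExists f g (ContinuousLinearMap.lsmul ℝ ℝ) volume :=
  fun t => (hg.comp (continuous_sub_left t)).integrable_mul hf

end ContinuousBoundedBy

section Series

variable {X ι : Type*} [MeasurableSpace X] {μ : Measure X} [Countable ι]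

lemma integrable_tsum_of_summable_integral_abs {F : ι → X → ℝ}
    (hF : ∀ i, Integrable (F i) μ) (hs : Summable fun i => ∫ x, |F i x| ∂μ) :
    Integrable (fun x => ∑' i, F i x) μ := by
  refine ⟨(AEMeasurable.tsum fun i => (hF i).aemeasurable).aestronglyMeasurable, ?_⟩
  calc ∫⁻ x, ‖∑' i, F i x‖ₑ ∂μ
      ≤ ∫⁻ x, ∑' i, ‖F i x‖ₑ ∂μ := lintegral_mono fun x => enorm_tsum_le_tsum_enorm
    _ = ∑' i, ∫⁻ x, ‖F i x‖ₑ ∂μ := lintegral_tsum fun i => (hF i).1.enorm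
    _ = ∑' i, ENNReal.ofReal (∫ x, |F i x| ∂μ) :=
        tsum_congr fun i => (ofReal_integral_norm_eq_lintegral_enorm (hF i)).symm
    _ < ⊤ := hs.tsum_ofReal_lt_top

lemma hasSum_integral_mul {F G : ι → ℝ → ℝ} {C : ι → ℝ} (hF : ∀ i, Integrable (F i))
    (hG : ∀ i, ContinuousBoundedBy (G i) (C i)) (hs : Summable fun i => (∫ s, |F i s|) * C i) :
    HasSum (fun i => ∫ s, F i s * G i s) (∫ s, ∑' i, F i s * G i s) :=
  hasSum_integral_of_summable_integral_norm (fun i => (hG i).integrable_mul (hF i))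
    (hs.of_nonneg_of_le (fun _ => integral_nonneg fun _ => norm_nonneg _)
      fun i => (hG i).integral_abs_mul_le (hF i))

end Series

section Convolution

variable {f f' g g' k : ℝ → ℝ} {C D : ℝ}

lemma convolution_comm_real (f g : ℝ → ℝ) : f ⋆ g = g ⋆ f := by
  funext t
  simp only [convolution_lsmul, smul_eq_mul, convolution_lsmul_swap (f := g), mul_comm]

lemma neg_convolution (f g : ℝ → ℝ) : (-f) ⋆ g = -(f ⋆ g) := by
  rw [← neg_one_smul ℝ f, smul_convolution, neg_one_smul]

lemma convolution_neg (f g : ℝ → ℝ) : f ⋆ (-g) = -(f ⋆ g) := by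
  rw [← neg_one_smul ℝ g, convolution_smul, neg_one_smul]

lemma convolution_sub (hf : Integrable f) (hg : ContinuousBoundedBy g C)
    (hg' : ContinuousBoundedBy g' D) : f ⋆ (g - g') = f ⋆ g - f ⋆ g' := by
  rw [sub_eq_add_neg, (hg.convolutionExists hf).distrib_add (hg'.neg.convolutionExists hf),
    convolution_neg, ← sub_eq_add_neg]

lemma sub_convolution (hf : Integrable f) (hf' : Integrable f') (hg : ContinuousBoundedBy g C) :
    (f - f') ⋆ g = f ⋆ g - f' ⋆ g := by
  rw [sub_eq_add_neg, (hg.convolutionExists hf).add_distrib (hg.convolutionExists hf'.neg),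
    neg_convolution, ← sub_eq_add_neg]

lemma convolution_nonneg (hf : 0 ≤ f) (hg : 0 ≤ g) : 0 ≤ f ⋆ g :=
  fun _ => integral_nonneg fun s => mul_nonneg (hf s) (hg _)

lemma ContinuousBoundedBy.convolution (hg : ContinuousBoundedBy g C) (hf : Integrable f) :
    ContinuousBoundedBy (f ⋆ g) ((∫ s, |f s|) * C) := by
  refine ⟨BddAbove.continuous_convolution_right_of_integrable _
    ⟨C, Set.forall_mem_range.2 hg.abs_le⟩ hf hg.continuous, fun t => ?_⟩
  exact (abs_integral_le_integral_abs (f := fun s => f s * g (t - s))).trans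
    ((hg.comp (continuous_sub_left t)).integral_abs_mul_le hf)

lemma integral_abs_convolution_le (hf : Integrable f) (hg : Integrable g) :
    ∫ t, |(f ⋆ g) t| ≤ (∫ t, |f t|) * ∫ t, |g t| :=
  calc ∫ t, |(f ⋆ g) t|
      ≤ ∫ t, ((fun s => |f s|) ⋆ fun s => |g s|) t :=
        integral_mono (hf.integrable_convolution _ hg).abs (hf.abs.integrable_convolution _ hg.abs)
          fun t => (abs_integral_le_integral_abs (f := fun s => f s * g (t - s))).trans_eq
            (integral_congr_ae (Eventually.of_forall fun s => abs_mul (f s) (g (t - s))))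
    _ = (∫ t, |f t|) * ∫ t, |g t| := integral_convolution _ hf.abs hg.abs

lemma convolution_assoc_real (hf : Integrable f) (hg : Integrable g)
    (hgD : ContinuousBoundedBy g D) (hk : ContinuousBoundedBy k C) :
    (f ⋆ g) ⋆ k = f ⋆ (g ⋆ k) := by
  funext t
  exact convolution_assoc _ _ _ _ (fun x y z => mul_assoc x y z) hf.1 hg.1
    hk.continuous.aestronglyMeasurable (Eventually.of_forall (hgD.convolutionExists hf))
    (Eventually.of_forall (hk.norm.convolutionExists hg.norm))
    ((hk.norm.convolution hg.norm).convolutionExists hf.norm t)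

lemma hasSum_convolution {ι : Type*} [Countable ι] {G : ι → ℝ → ℝ} {K : ι → ℝ}
    (hf : Integrable f) (hG : ∀ i, ContinuousBoundedBy (G i) (K i)) (hK : Summable K) (t : ℝ) :
    HasSum (fun i => (f ⋆ G i) t) ((f ⋆ fun s => ∑' i, G i s) t) := by
  have := hasSum_integral_mul (fun _ => hf)
    (fun i => (hG i).comp (continuous_sub_left t))
    (hK.mul_left (∫ s, |f s|))
  simp only [tsum_mul_left] at this
  exact this

end Convolution

section Resolvent

/-- The `(n + 1)`-fold convolution of `p` with itself. -/
noncomputable def convolutionPower (p : ℝ → ℝ) : ℕ → ℝ → ℝ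
  | 0 => p
  | n + 1 => p ⋆ convolutionPower p n

/-- The Neumann series `p + p ⋆ p + p ⋆ p ⋆ p + ⋯`, so that `1 + resolventKernel p` inverts `1 - p`
for the convolution product. Where the series diverges its value is `0`. -/
noncomputable def resolventKernel (p : ℝ → ℝ) (t : ℝ) : ℝ := ∑' n, convolutionPower p n t

variable {p k ρ ψ : ℝ → ℝ} {C D E : ℝ}

lemma convolutionPower_nonneg (hp : 0 ≤ p) : ∀ n, 0 ≤ convolutionPower p n
  | 0 => hp
  | n + 1 => convolution_nonneg hp (convolutionPower_nonneg hp n)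

lemma integrable_convolutionPower (hp : Integrable p) : ∀ n, Integrable (convolutionPower p n)
  | 0 => hp
  | n + 1 => hp.integrable_convolution _ (integrable_convolutionPower hp n)

lemma integral_abs_convolutionPower_le (hp : Integrable p) (n : ℕ) :
    ∫ t, |convolutionPower p n t| ≤ (∫ t, |p t|) ^ (n + 1) := by
  induction n with
  | zero => simp only [convolutionPower, zero_add, pow_one, le_refl]
  | succ n ih =>
    rw [pow_succ']
    exact (integral_abs_convolution_le hp (integrable_convolutionPower hp n)).trans
      (mul_le_mul_of_nonneg_left ih (integral_nonneg fun t => abs_nonneg (p t)))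

lemma ContinuousBoundedBy.convolutionPower (hpC : ContinuousBoundedBy p C) (hp : Integrable p)
    (n : ℕ) : ContinuousBoundedBy (convolutionPower p n) ((∫ t, |p t|) ^ n * C) := by
  induction n with
  | zero => rwa [pow_zero, one_mul]
  | succ n ih =>
    rw [pow_succ', mul_assoc]
    exact ih.convolution hp

lemma summable_pow_integral_abs (hm : ∫ t, |p t| < 1) : Summable fun n => (∫ t, |p t|) ^ n :=
  summable_geometric_of_lt_one (integral_nonneg fun t => abs_nonneg (p t)) hm

lemma resolventKernel_nonneg (hp : 0 ≤ p) : 0 ≤ resolventKernel p :=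
  fun t => tsum_nonneg fun n => convolutionPower_nonneg hp n t

lemma integrable_resolventKernel (hp : Integrable p) (hm : ∫ t, |p t| < 1) :
    Integrable (resolventKernel p) :=
  integrable_tsum_of_summable_integral_abs (integrable_convolutionPower hp)
    (((summable_nat_add_iff 1).2 (summable_pow_integral_abs hm)).of_nonneg_of_le
      (fun _ => integral_nonneg fun _ => abs_nonneg _) (integral_abs_convolutionPower_le hp))

lemma ContinuousBoundedBy.resolventKernel (hpC : ContinuousBoundedBy p C) (hp : Integrable p)
    (hm : ∫ t, |p t| < 1) :
    ContinuousBoundedBy (resolventKernel p) (∑' n, (∫ t, |p t|) ^ n * C) :=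
  ContinuousBoundedBy.tsum (hpC.convolutionPower hp) ((summable_pow_integral_abs hm).mul_right C)

lemma resolventKernel_eq (hpC : ContinuousBoundedBy p C) (hp : Integrable p)
    (hm : ∫ t, |p t| < 1) : resolventKernel p = p + p ⋆ resolventKernel p := by
  funext t
  have hbound := hpC.convolutionPower hp
  have hgeom := (summable_pow_integral_abs hm).mul_right C
  have hsum : Summable fun n => convolutionPower p n t :=
    hgeom.of_norm_bounded fun n => (hbound n).abs_le t
  calc resolventKernel p t
      = p t + ∑' n, (p ⋆ convolutionPower p n) t := hsum.tsum_eq_zero_add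
    _ = p t + (p ⋆ resolventKernel p) t := by
        rw [(hasSum_convolution hp hbound hgeom t).tsum_eq]; rfl

lemma eq_add_convolution_iff_of_resolvent (hp : Integrable p) (hpC : ContinuousBoundedBy p C)
    (hρ : Integrable ρ) (hρD : ContinuousBoundedBy ρ D) (hres : ρ = p + p ⋆ ρ)
    (hk : ContinuousBoundedBy k E) {B : ℝ} (hψ : ContinuousBoundedBy ψ B) :
    ψ = k + p ⋆ ψ ↔ ψ = k + ρ ⋆ k := by
  have hres_left {h : ℝ → ℝ} {B : ℝ} (hh : ContinuousBoundedBy h B) :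
      ρ ⋆ h = p ⋆ h + p ⋆ (ρ ⋆ h) := by
    conv_lhs => rw [hres]
    rw [(hh.convolutionExists hp).add_distrib
      (hh.convolutionExists (hp.integrable_convolution _ hρ)), convolution_assoc_real hp hρ hρD hh]
  have hres_right : ρ ⋆ ψ = p ⋆ ψ + ρ ⋆ (p ⋆ ψ) := by
    rw [hres_left hψ, ← convolution_assoc_real hp hρ hρD hψ, convolution_comm_real p ρ,
      convolution_assoc_real hρ hp hpC hψ]
  constructor <;> intro h
  · have hρψ : ρ ⋆ ψ = ρ ⋆ k + ρ ⋆ (p ⋆ ψ) := by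
      conv_lhs => rw [h]
      exact (hk.convolutionExists hρ).distrib_add ((hψ.convolution hp).convolutionExists hρ)
    rw [← add_right_cancel (hres_right.symm.trans hρψ), ← h]
  · have hpψ : p ⋆ ψ = p ⋆ k + p ⋆ (ρ ⋆ k) := by
      rw [h, (hk.convolutionExists hp).distrib_add ((hk.convolution hρ).convolutionExists hp)]
    rw [hpψ, ← hres_left hk, ← h]

end Resolvent

section Delay

/-- The discrete delay operator `φ ↦ ∑ⱼ w j * φ (· - r j)`. The operator `SBop b c τ` has the
weights `b ^ j` and the delays `(j + 1) * c * τ`. -/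
noncomputable def delaySum {ι : Type*} (w r : ι → ℝ) (φ : ℝ → ℝ) (t : ℝ) : ℝ :=
  ∑' j, w j * φ (t - r j)

variable {ι : Type*} {w r : ι → ℝ} {f g : ℝ → ℝ} {C : ℝ}

lemma ContinuousBoundedBy.delaySum_term (hg : ContinuousBoundedBy g C) (j : ι) :
    ContinuousBoundedBy (fun t => w j * g (t - r j)) (|w j| * C) :=
  (hg.comp (continuous_sub_right (r j))).const_smul (w j)

lemma ContinuousBoundedBy.delaySum (hg : ContinuousBoundedBy g C) (hw : Summable w) :
    ContinuousBoundedBy (delaySum w r g) (∑' j, |w j| * C) :=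
  ContinuousBoundedBy.tsum hg.delaySum_term (hw.abs.mul_right C)

lemma integrable_delaySum_term (hf : Integrable f) (j : ι) :
    Integrable fun t => w j * f (t - r j) :=
  (hf.comp_sub_right (r j)).const_mul (w j)

lemma summable_integral_abs_delaySum_term (hw : Summable w) :
    Summable fun j => ∫ t, |w j * f (t - r j)| := by
  simp only [abs_mul, integral_const_mul, integral_sub_right_eq_self fun t => |f t|]
  exact hw.abs.mul_right _

variable [Countable ι]

lemma integrable_delaySum (hw : Summable w) (hf : Integrable f) :
    Integrable (delaySum w r f) :=
  integrable_tsum_of_summable_integral_abs (integrable_delaySum_term hf)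
    (summable_integral_abs_delaySum_term hw)

lemma integral_delaySum (hw : Summable w) (hf : Integrable f) :
    ∫ t, delaySum w r f t = (∑' j, w j) * ∫ t, f t :=
  calc ∫ t, delaySum w r f t
      = ∑' j, ∫ t, w j * f (t - r j) :=
        (integral_tsum_of_summable_integral_norm (integrable_delaySum_term hf)
          (summable_integral_abs_delaySum_term hw)).symm
    _ = (∑' j, w j) * ∫ t, f t := by
        simp only [integral_const_mul, integral_sub_right_eq_self f, tsum_mul_right]

lemma convolution_delaySum (hw : Summable w) (hf : Integrable f) (hg : ContinuousBoundedBy g C) :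
    f ⋆ delaySum w r g = delaySum w r (f ⋆ g) := by
  funext t
  refine (hasSum_convolution hf hg.delaySum_term (hw.abs.mul_right C) t).tsum_eq.symm.trans
    (tsum_congr fun j => ?_)
  simp only [convolution_lsmul, smul_eq_mul, ← integral_const_mul]
  exact integral_congr_ae (Eventually.of_forall fun s => by
    simp only [mul_left_comm, sub_right_comm])

lemma delaySum_convolution (hw : Summable w) (hf : Integrable f) (hg : ContinuousBoundedBy g C) :
    delaySum w r f ⋆ g = delaySum w r (f ⋆ g) := by
  funext t
  have hsum := hasSum_integral_mul (integrable_delaySum_term (w := w) (r := r) hf)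
    (fun _ => hg.comp (continuous_sub_left t))
    ((summable_integral_abs_delaySum_term hw).mul_right C)
  simp only [tsum_mul_right] at hsum
  refine hsum.tsum_eq.symm.trans (tsum_congr fun j => ?_)
  calc ∫ s, w j * f (s - r j) * g (t - s)
      = w j * ∫ s, f (s - r j) * g (t - r j - (s - r j)) := by
        simp only [mul_assoc, integral_const_mul, sub_sub_sub_cancel_right]
    _ = w j * (f ⋆ g) (t - r j) :=
        congrArg (w j * ·) (integral_sub_right_eq_self (fun s => f s * g (t - r j - s)) (r j))

end Delay

section Exponential

variable {α γ C : ℝ} {g k : ℝ → ℝ}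

lemma hasDerivAt_integral_Iic (hk : Continuous k) (hi : ∀ t, IntegrableOn k (Set.Iic t)) (t : ℝ) :
    HasDerivAt (fun t => ∫ s in Set.Iic t, k s) (k t) t := by
  have h : (fun t => ∫ s in Set.Iic t, k s) =
      fun t => (∫ s in Set.Iic 0, k s) + ∫ s in (0 : ℝ)..t, k s := by
    funext t
    rw [← intervalIntegral.integral_Iic_sub_Iic (hi 0) (hi t), add_sub_cancel]
  rw [h]
  exact (hk.integral_hasStrictDerivAt 0 t).hasDerivAt.const_add _

lemma hasDerivAt_exp_const_mul (a t : ℝ) :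
    HasDerivAt (fun t => Real.exp (a * t)) (a * Real.exp (a * t)) t := by
  simpa only [id_eq, mul_one, mul_comm] using ((hasDerivAt_id t).const_mul a).exp

/-- The bounded solution of `v' = α v + g`, for `α < 0` and bounded `g`. -/
noncomputable def causalExp (α : ℝ) (g : ℝ → ℝ) (t : ℝ) : ℝ :=
  Real.exp (α * t) * ∫ s in Set.Iic t, Real.exp (-α * s) * g s

/-- The bounded solution of `v' = γ v - g`, for `0 < γ` and bounded `g`: the causal solution with
time reversed. -/
noncomputable def anticausalExp (γ : ℝ) (g : ℝ → ℝ) (t : ℝ) : ℝ :=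
  causalExp (-γ) (fun s => g (-s)) (-t)

lemma anticausalExp_eq (γ : ℝ) (g : ℝ → ℝ) (t : ℝ) :
    anticausalExp γ g t = Real.exp (γ * t) * ∫ s in Set.Ioi t, Real.exp (-γ * s) * g s := by
  rw [anticausalExp, causalExp, neg_mul_neg]
  have := integral_comp_neg_Iic (-t) fun s => Real.exp (-γ * s) * g s
  simpa only [neg_neg, mul_neg, neg_mul] using congrArg (Real.exp (γ * t) * ·) this

lemma hasDerivAt_causalExp (hα : α < 0) (hg : ContinuousBoundedBy g C) (t : ℝ) :
    HasDerivAt (causalExp α g) (α * causalExp α g t + g t) t := by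
  have hcont : Continuous fun s => Real.exp (-α * s) * g s :=
    (by fun_prop : Continuous fun s => Real.exp (-α * s)).mul hg.continuous
  have hint (t : ℝ) : IntegrableOn (fun s => Real.exp (-α * s) * g s) (Set.Iic t) :=
    hg.integrable_mul (integrableOn_exp_mul_Iic (neg_pos.2 hα) t)
  refine ((hasDerivAt_exp_const_mul α t).mul
    (hasDerivAt_integral_Iic hcont hint t)).congr_deriv ?_
  rw [← mul_assoc (Real.exp _) (Real.exp _), ← Real.exp_add, neg_mul, add_neg_cancel,
    Real.exp_zero, one_mul, mul_assoc, causalExp]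

lemma ContinuousBoundedBy.causalExp (hα : α < 0) (hg : ContinuousBoundedBy g C) :
    ContinuousBoundedBy (causalExp α g) (C / -α) := by
  refine ⟨continuous_iff_continuousAt.2 fun t => (hasDerivAt_causalExp hα hg t).continuousAt,
    fun t => ?_⟩
  have hint := integrableOn_exp_mul_Iic (neg_pos.2 hα) t
  calc |Real.exp (α * t) * ∫ s in Set.Iic t, Real.exp (-α * s) * g s|
      ≤ Real.exp (α * t) * ((∫ s in Set.Iic t, |Real.exp (-α * s)|) * C) := by
        rw [abs_mul, Real.abs_exp]
        exact mul_le_mul_of_nonneg_left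
          (abs_integral_le_integral_abs.trans (hg.integral_abs_mul_le hint)) (Real.exp_pos _).le
    _ = Real.exp (α * t + -α * t) * C / -α := by
        simp only [Real.abs_exp]
        rw [integral_exp_mul_Iic (neg_pos.2 hα), Real.exp_add]
        ring
    _ = C / -α := by rw [neg_mul, add_neg_cancel, Real.exp_zero, one_mul]

lemma hasDerivAt_anticausalExp (hγ : 0 < γ) (hg : ContinuousBoundedBy g C) (t : ℝ) :
    HasDerivAt (anticausalExp γ g) (γ * anticausalExp γ g t - g t) t := by
  refine ((hasDerivAt_causalExp (neg_neg_of_pos hγ) (hg.comp continuous_neg) (-t)).comp t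
    (hasDerivAt_neg t)).congr_deriv ?_
  rw [neg_neg, anticausalExp]
  ring

lemma ContinuousBoundedBy.anticausalExp (hγ : 0 < γ) (hg : ContinuousBoundedBy g C) :
    ContinuousBoundedBy (anticausalExp γ g) (C / γ) := by
  have h := ((hg.comp continuous_neg).causalExp (neg_neg_of_pos hγ)).comp continuous_neg
  rw [neg_neg] at h
  exact h

lemma eq_zero_of_hasDerivAt_mul_of_bounded {a : ℝ} (ha : a ≠ 0) {v : ℝ → ℝ}
    (hv : ∀ t, HasDerivAt v (a * v t) t) (hb : ∀ t, |v t| ≤ C) : v = 0 := by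
  have hderiv (s : ℝ) : HasDerivAt (fun s => Real.exp (-a * s) * v s) 0 s :=
    ((hasDerivAt_exp_const_mul (-a) s).mul (hv s)).congr_deriv (by ring)
  funext t
  have hshift (x : ℝ) : v t = Real.exp (-x) * v (t + x / a) := by
    have hconst := is_const_of_deriv_eq_zero (fun s => (hderiv s).differentiableAt)
      (fun s => (hderiv s).deriv) t (t + x / a)
    rw [mul_add, mul_div_assoc', neg_mul, neg_mul, neg_div, mul_div_cancel_left₀ x ha,
      Real.exp_add, mul_assoc] at hconst
    exact mul_left_cancel₀ (Real.exp_ne_zero _) hconst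
  have hle (x : ℝ) : |v t| ≤ Real.exp (-x) * C := by
    rw [hshift x, abs_mul, Real.abs_exp]
    exact mul_le_mul_of_nonneg_left (hb _) (Real.exp_pos _).le
  have hlim : Tendsto (fun x => Real.exp (-x) * C) atTop (nhds 0) := by
    simpa only [zero_mul] using Real.tendsto_exp_neg_atTop_nhds_zero.mul_const C
  exact abs_nonpos_iff.1 (ge_of_tendsto' hlim hle)

end Exponential

section BoundedC2

/-- `φ` is twice continuously differentiable, and `φ`, `φ'`, `φ''` are bounded. -/
structure IsBoundedC2 (φ : ℝ → ℝ) : Prop where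
  contDiff : ContDiff ℝ 2 φ
  exists_bound : ∃ C : ℝ, ∀ t, |φ t| ≤ C ∧ |deriv φ t| ≤ C ∧ |deriv (deriv φ) t| ≤ C

namespace IsBoundedC2

variable {α γ : ℝ} {u u₁ u₂ v : ℝ → ℝ}

lemma of_hasDerivAt {B B₁ B₂ : ℝ} (hu : ∀ t, |u t| ≤ B)
    (hu₁ : ContinuousBoundedBy u₁ B₁) (hu₂ : ContinuousBoundedBy u₂ B₂)
    (hd : ∀ t, HasDerivAt u (u₁ t) t) (hd₁ : ∀ t, HasDerivAt u₁ (u₂ t) t) : IsBoundedC2 u := by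
  have e₁ : deriv u = u₁ := funext fun t => (hd t).deriv
  have e₂ : deriv u₁ = u₂ := funext fun t => (hd₁ t).deriv
  refine ⟨?_, max B (max B₁ B₂), fun t => ?_⟩
  · rw [← one_add_one_eq_two, contDiff_succ_iff_deriv, e₁, contDiff_one_iff_deriv, e₂]
    exact ⟨fun t => (hd t).differentiableAt, fun h => absurd h WithTop.one_ne_top,
      fun t => (hd₁ t).differentiableAt, hu₂.continuous⟩
  · rw [e₁, e₂]
    exact ⟨le_max_of_le_left (hu t), le_max_of_le_right (le_max_of_le_left (hu₁.abs_le t)),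
      le_max_of_le_right (le_max_of_le_right (hu₂.abs_le t))⟩

lemma hasDerivAt (hu : IsBoundedC2 u) (t : ℝ) : HasDerivAt u (deriv u t) t :=
  (hu.contDiff.differentiable two_ne_zero t).hasDerivAt

lemma contDiff_deriv (hu : IsBoundedC2 u) : ContDiff ℝ 1 (deriv u) :=
  (contDiff_succ_iff_deriv.1 (one_add_one_eq_two (R := WithTop ℕ∞) ▸ hu.contDiff)).2.2

lemma hasDerivAt_deriv (hu : IsBoundedC2 u) (t : ℝ) :
    HasDerivAt (deriv u) (deriv (deriv u) t) t :=
  (hu.contDiff_deriv.differentiable one_ne_zero t).hasDerivAt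

lemma exists_continuousBoundedBy (hu : IsBoundedC2 u) : ∃ C, ContinuousBoundedBy u C :=
  hu.exists_bound.imp fun _ hC => ⟨hu.contDiff.continuous, fun t => (hC t).1⟩

lemma deriv_sub (hu : IsBoundedC2 u) (hv : IsBoundedC2 v) :
    deriv (u - v) = deriv u - deriv v :=
  funext fun t => ((hu.hasDerivAt t).sub (hv.hasDerivAt t)).deriv

lemma deriv_deriv_sub (hu : IsBoundedC2 u) (hv : IsBoundedC2 v) :
    deriv (deriv (u - v)) = deriv (deriv u) - deriv (deriv v) :=
  hu.deriv_sub hv ▸ funext fun t => ((hu.hasDerivAt_deriv t).sub (hv.hasDerivAt_deriv t)).deriv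

lemma sub (hu : IsBoundedC2 u) (hv : IsBoundedC2 v) : IsBoundedC2 (u - v) := by
  obtain ⟨C, hC⟩ := hu.exists_bound
  obtain ⟨D, hD⟩ := hv.exists_bound
  refine ⟨hu.contDiff.sub hv.contDiff, C + D, fun t => ?_⟩
  rw [hu.deriv_deriv_sub hv, hu.deriv_sub hv]
  exact ⟨(abs_sub _ _).trans (add_le_add (hC t).1 (hD t).1),
    (abs_sub _ _).trans (add_le_add (hC t).2.1 (hD t).2.1),
    (abs_sub _ _).trans (add_le_add (hC t).2.2 (hD t).2.2)⟩

lemma eq_zero_of_second_order (hα : α ≠ 0) (hγ : γ ≠ 0) (hu : IsBoundedC2 u)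
    (heq : ∀ t, deriv (deriv u) t - (α + γ) * deriv u t + α * γ * u t = 0) : u = 0 := by
  obtain ⟨C, hC⟩ := hu.exists_bound
  have hfactor : deriv u - α • u = 0 := by
    refine eq_zero_of_hasDerivAt_mul_of_bounded hγ (C := C + |α| * C) (fun t => ?_) fun t => ?_
    · refine ((hu.hasDerivAt_deriv t).sub ((hu.hasDerivAt t).const_smul α)).congr_deriv ?_
      simp only [Pi.sub_apply, Pi.smul_apply, smul_eq_mul]
      linear_combination heq t
    · refine (abs_sub _ _).trans (add_le_add (hC t).2.1 ?_)
      exact (abs_mul α (u t)).trans_le (mul_le_mul_of_nonneg_left (hC t).1 (abs_nonneg α))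
  exact eq_zero_of_hasDerivAt_mul_of_bounded hα
    (fun t => (hu.hasDerivAt t).congr_deriv (sub_eq_zero.1 (congrFun hfactor t)))
    fun t => (hC t).1

end IsBoundedC2

end BoundedC2

section Green

variable {α γ C : ℝ} {g u : ℝ → ℝ}

/-- The Green function of `-(∂ - α)(∂ - γ)` for `α < 0 < γ`: a multiple of `exp (γ * t)` for
`t ≤ 0` and of `exp (α * t)` for `0 ≤ t`. -/
noncomputable def greenKernel (α γ t : ℝ) : ℝ :=
  (γ - α)⁻¹ * Real.exp (min (γ * t) (α * t))

lemma greenKernel_pos (h : α < γ) (t : ℝ) : 0 < greenKernel α γ t :=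
  mul_pos (inv_pos.2 (sub_pos.2 h)) (Real.exp_pos _)

lemma greenKernel_of_nonneg (h : α ≤ γ) {t : ℝ} (ht : 0 ≤ t) :
    greenKernel α γ t = (γ - α)⁻¹ * Real.exp (α * t) := by
  rw [greenKernel, min_eq_right (mul_le_mul_of_nonneg_right h ht)]

lemma greenKernel_of_nonpos (h : α ≤ γ) {t : ℝ} (ht : t ≤ 0) :
    greenKernel α γ t = (γ - α)⁻¹ * Real.exp (γ * t) := by
  rw [greenKernel, min_eq_left (mul_le_mul_of_nonpos_right h ht)]

lemma continuousBoundedBy_greenKernel (hα : α ≤ 0) (hγ : 0 ≤ γ) :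
    ContinuousBoundedBy (greenKernel α γ) (γ - α)⁻¹ := by
  have hK : 0 ≤ (γ - α)⁻¹ := inv_nonneg.2 (sub_nonneg.2 (hα.trans hγ))
  refine ⟨by unfold greenKernel; fun_prop, fun t => ?_⟩
  rw [greenKernel, abs_mul, abs_of_nonneg hK, Real.abs_exp]
  refine mul_le_of_le_one_right hK (Real.exp_le_one_iff.2 ?_)
  rcases le_total 0 t with ht | ht
  · exact min_le_of_right_le (mul_nonpos_of_nonpos_of_nonneg hα ht)
  · exact min_le_of_left_le (mul_nonpos_of_nonneg_of_nonpos hγ ht)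

lemma greenKernel_sub_le (h : α ≤ γ) {r : ℝ} (hr : 0 ≤ r) (t : ℝ) :
    greenKernel α γ (t - r) ≤ Real.exp (-(α * r)) * greenKernel α γ t := by
  rw [greenKernel, greenKernel, mul_left_comm, ← Real.exp_add]
  refine mul_le_mul_of_nonneg_left (Real.exp_le_exp.2 ?_) (inv_nonneg.2 (sub_nonneg.2 h))
  rw [← min_add_add_left]
  have := mul_le_mul_of_nonneg_right h hr
  exact min_le_min (by linarith) (by linarith)

lemma integrableOn_greenKernel_Iic (h : α ≤ γ) (hγ : 0 < γ) :
    IntegrableOn (greenKernel α γ) (Set.Iic 0) :=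
  IntegrableOn.congr_fun ((integrableOn_exp_mul_Iic hγ 0).const_mul (γ - α)⁻¹)
    (fun _ ht => (greenKernel_of_nonpos h ht).symm) measurableSet_Iic

lemma integrableOn_greenKernel_Ioi (h : α ≤ γ) (hα : α < 0) :
    IntegrableOn (greenKernel α γ) (Set.Ioi 0) :=
  IntegrableOn.congr_fun ((integrableOn_exp_mul_Ioi hα 0).const_mul (γ - α)⁻¹)
    (fun _ ht => (greenKernel_of_nonneg h (le_of_lt ht)).symm) measurableSet_Ioi

lemma integrable_greenKernel (hα : α < 0) (hγ : 0 < γ) : Integrable (greenKernel α γ) := by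
  have h := (hα.trans hγ).le
  rw [← integrableOn_univ, ← Set.Iic_union_Ioi (a := (0 : ℝ))]
  exact (integrableOn_greenKernel_Iic h hγ).union (integrableOn_greenKernel_Ioi h hα)

lemma integral_greenKernel (hα : α < 0) (hγ : 0 < γ) :
    ∫ t, greenKernel α γ t = (-α * γ)⁻¹ := by
  have h : α ≤ γ := (hα.trans hγ).le
  calc ∫ t, greenKernel α γ t
      = (∫ t in Set.Iic 0, greenKernel α γ t) + ∫ t in Set.Ioi 0, greenKernel α γ t :=
        (intervalIntegral.integral_Iic_add_Ioi (integrableOn_greenKernel_Iic h hγ)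
          (integrableOn_greenKernel_Ioi h hα)).symm
    _ = (γ - α)⁻¹ * (1 / γ) + (γ - α)⁻¹ * (-1 / α) := by
        rw [setIntegral_congr_fun measurableSet_Iic fun _ ht => greenKernel_of_nonpos h ht,
          setIntegral_congr_fun measurableSet_Ioi fun _ ht => greenKernel_of_nonneg h (le_of_lt ht),
          integral_const_mul, integral_const_mul, integral_exp_mul_Iic hγ, integral_exp_mul_Ioi hα,
          mul_zero, mul_zero, Real.exp_zero]
    _ = (-α * γ)⁻¹ := by
        have := sub_pos.2 (hα.trans hγ)
        have := hα.ne
        field_simp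
        ring

lemma greenKernel_convolution (hα : α < 0) (hγ : 0 < γ) (hg : ContinuousBoundedBy g C) :
    greenKernel α γ ⋆ g = (γ - α)⁻¹ • (causalExp α g + anticausalExp γ g) := by
  have h : α ≤ γ := (hα.trans hγ).le
  funext t
  have hint : Integrable fun s => greenKernel α γ (t - s) * g s :=
    hg.integrable_mul ((integrable_greenKernel hα hγ).comp_sub_left t)
  have hshift (a s : ℝ) : (γ - α)⁻¹ * Real.exp (a * (t - s)) * g s =
      (γ - α)⁻¹ * Real.exp (a * t) * (Real.exp (-a * s) * g s) := by
    rw [mul_sub, sub_eq_add_neg (a * t), Real.exp_add, neg_mul]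
    ring
  have hpast : ∫ s in Set.Iic t, greenKernel α γ (t - s) * g s =
      (γ - α)⁻¹ * causalExp α g t := by
    rw [causalExp, ← mul_assoc, ← integral_const_mul]
    refine setIntegral_congr_fun measurableSet_Iic fun s hs => ?_
    simp only [greenKernel_of_nonneg h (sub_nonneg.2 hs), hshift]
  have hfuture : ∫ s in Set.Ioi t, greenKernel α γ (t - s) * g s =
      (γ - α)⁻¹ * anticausalExp γ g t := by
    rw [anticausalExp_eq, ← mul_assoc, ← integral_const_mul]
    refine setIntegral_congr_fun measurableSet_Ioi fun s hs => ?_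
    simp only [greenKernel_of_nonpos h (sub_nonpos.2 (le_of_lt hs)), hshift]
  calc (greenKernel α γ ⋆ g) t
      = ∫ s, greenKernel α γ (t - s) * g s := convolution_lsmul_swap
    _ = (γ - α)⁻¹ * causalExp α g t + (γ - α)⁻¹ * anticausalExp γ g t := by
        rw [← intervalIntegral.integral_Iic_add_Ioi (b := t) hint.integrableOn hint.integrableOn,
          hpast, hfuture]
    _ = ((γ - α)⁻¹ • (causalExp α g + anticausalExp γ g)) t := (mul_add _ _ _).symm

lemma isBoundedC2_and_second_order_greenKernel_convolution (hα : α < 0) (hγ : 0 < γ)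
    (hg : ContinuousBoundedBy g C) :
    IsBoundedC2 (greenKernel α γ ⋆ g) ∧
      ∀ t, deriv (deriv (greenKernel α γ ⋆ g)) t - (α + γ) * deriv (greenKernel α γ ⋆ g) t +
        α * γ * (greenKernel α γ ⋆ g) t = -g t := by
  have hne : γ - α ≠ 0 := (sub_pos.2 (hα.trans hγ)).ne'
  have hP := hg.causalExp hα
  have hQ := hg.anticausalExp hγ
  have hP' := hasDerivAt_causalExp hα hg
  have hQ' := hasDerivAt_anticausalExp hγ hg
  have hu := greenKernel_convolution hα hγ hg
  set P := causalExp α g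
  set Q := anticausalExp γ g
  have hd (t : ℝ) : HasDerivAt (greenKernel α γ ⋆ g) (((γ - α)⁻¹ • (α • P + γ • Q)) t) t := by
    rw [hu]
    refine (((hP' t).add (hQ' t)).const_smul (γ - α)⁻¹).congr_deriv ?_
    simp only [Pi.smul_apply, Pi.add_apply, smul_eq_mul]
    ring
  have hd₁ (t : ℝ) : HasDerivAt ((γ - α)⁻¹ • (α • P + γ • Q))
      (((γ - α)⁻¹ • (α ^ 2 • P + γ ^ 2 • Q) - g) t) t := by
    refine ((((hP' t).const_smul α).add ((hQ' t).const_smul γ)).const_smul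
      (γ - α)⁻¹).congr_deriv ?_
    simp only [Pi.smul_apply, Pi.add_apply, Pi.sub_apply, smul_eq_mul]
    field_simp
    ring
  refine ⟨.of_hasDerivAt (hg.convolution (integrable_greenKernel hα hγ)).abs_le
    (((hP.const_smul _).add (hQ.const_smul _)).const_smul _)
    ((((hP.const_smul _).add (hQ.const_smul _)).const_smul _).sub hg) hd hd₁, fun t => ?_⟩
  rw [funext fun t => (hd t).deriv, (hd₁ t).deriv, hu]
  simp only [Pi.smul_apply, Pi.add_apply, Pi.sub_apply, smul_eq_mul]
  ring

lemma isBoundedC2_and_second_order_iff (hα : α < 0) (hγ : 0 < γ)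
    (hg : ContinuousBoundedBy g C) :
    (IsBoundedC2 u ∧
      ∀ t, deriv (deriv u) t - (α + γ) * deriv u t + α * γ * u t = -g t) ↔
      u = greenKernel α γ ⋆ g := by
  obtain ⟨hv, hveq⟩ := isBoundedC2_and_second_order_greenKernel_convolution hα hγ hg
  refine ⟨fun ⟨hu, hueq⟩ => sub_eq_zero.1 ?_, fun h => h ▸ ⟨hv, hveq⟩⟩
  refine (hu.sub hv).eq_zero_of_second_order hα.ne hγ.ne' fun t => ?_
  rw [hu.deriv_deriv_sub hv, hu.deriv_sub hv]
  simp only [Pi.sub_apply]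
  linear_combination hueq t - hveq t

end Green

section Inversion

variable {ι : Type*} {w r : ι → ℝ} {α γ C : ℝ} {f φ ψ : ℝ → ℝ}

/-- The kernel `p` that turns `ψ'' - (α + γ) ψ' - delaySum w r ψ = f` into the fixed point equation
`ψ = p ⋆ ψ - greenKernel α γ ⋆ f`: the Green kernel absorbs the second-order operator, and `p`
collects `-αγ ψ` and the delays. -/
noncomputable def perturbationKernel (w r : ι → ℝ) (α γ : ℝ) : ℝ → ℝ :=
  (-α * γ) • greenKernel α γ - delaySum w r (greenKernel α γ)

/-- The kernel of the inverse of `φ ↦ φ'' - (α + γ) φ' - delaySum w r φ`. -/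
noncomputable def inverseKernel (w r : ι → ℝ) (α γ : ℝ) : ℝ → ℝ :=
  -(greenKernel α γ + resolventKernel (perturbationKernel w r α γ) ⋆ greenKernel α γ)

lemma perturbationKernel_nonneg (hα : α < 0) (hγ : 0 < γ) (hw : ∀ j, 0 ≤ w j) (hr : ∀ j, 0 ≤ r j)
    (hsum : Summable fun j => w j * Real.exp (-(α * r j)))
    (hle : ∑' j, w j * Real.exp (-(α * r j)) ≤ -α * γ) : 0 ≤ perturbationKernel w r α γ := by
  intro t
  have h : α < γ := hα.trans hγ
  have hterm (j : ι) : w j * greenKernel α γ (t - r j) ≤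
      w j * Real.exp (-(α * r j)) * greenKernel α γ t := by
    rw [mul_assoc]
    exact mul_le_mul_of_nonneg_left (greenKernel_sub_le h.le (hr j) t) (hw j)
  have hterm_nonneg (j : ι) : 0 ≤ w j * greenKernel α γ (t - r j) :=
    mul_nonneg (hw j) (greenKernel_pos h _).le
  have hbound := hsum.mul_right (greenKernel α γ t)
  refine sub_nonneg.2 ?_
  calc ∑' j, w j * greenKernel α γ (t - r j)
      ≤ ∑' j, w j * Real.exp (-(α * r j)) * greenKernel α γ t :=
        (hbound.of_nonneg_of_le hterm_nonneg hterm).tsum_le_tsum hterm hbound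
    _ = (∑' j, w j * Real.exp (-(α * r j))) * greenKernel α γ t := tsum_mul_right
    _ ≤ -α * γ * greenKernel α γ t :=
        mul_le_mul_of_nonneg_right hle (greenKernel_pos h t).le

lemma exists_continuousBoundedBy_perturbationKernel (hα : α < 0) (hγ : 0 < γ) (hw : Summable w) :
    ∃ D, ContinuousBoundedBy (perturbationKernel w r α γ) D :=
  have hH := continuousBoundedBy_greenKernel hα.le hγ.le
  ⟨_, (hH.const_smul (-α * γ)).sub (hH.delaySum hw)⟩

lemma inverseKernel_neg (h : α < γ) (hp : 0 ≤ perturbationKernel w r α γ) (t : ℝ) :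
    inverseKernel w r α γ t < 0 :=
  neg_neg_of_pos (add_pos_of_pos_of_nonneg (greenKernel_pos h t)
    (convolution_nonneg (resolventKernel_nonneg hp) (fun s => (greenKernel_pos h s).le) t))

variable [Countable ι]

lemma integrable_perturbationKernel (hα : α < 0) (hγ : 0 < γ) (hw : Summable w) :
    Integrable (perturbationKernel w r α γ) :=
  have hH := integrable_greenKernel hα hγ
  (hH.smul (-α * γ)).sub (integrable_delaySum hw hH)

lemma integral_perturbationKernel (hα : α < 0) (hγ : 0 < γ) (hw : Summable w) :
    ∫ t, perturbationKernel w r α γ t = 1 - (∑' j, w j) / (-α * γ) := by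
  have hH := integrable_greenKernel hα hγ
  have hmass := (mul_pos (neg_pos.2 hα) hγ).ne'
  calc ∫ t, perturbationKernel w r α γ t
      = -α * γ * (∫ t, greenKernel α γ t) - ∫ t, delaySum w r (greenKernel α γ) t :=
        (integral_sub (hH.smul (-α * γ)) (integrable_delaySum hw hH)).trans
          (congrArg (· - _) (integral_const_mul _ _))
    _ = 1 - (∑' j, w j) / (-α * γ) := by
        rw [integral_delaySum hw hH, integral_greenKernel hα hγ, mul_inv_cancel₀ hmass,
          div_eq_mul_inv]

lemma integral_abs_perturbationKernel_lt_one (hα : α < 0) (hγ : 0 < γ) (hw : Summable w)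
    (hw_pos : 0 < ∑' j, w j) (hp : 0 ≤ perturbationKernel w r α γ) :
    ∫ t, |perturbationKernel w r α γ t| < 1 := by
  simp only [abs_of_nonneg (hp _)]
  rw [integral_perturbationKernel hα hγ hw]
  exact sub_lt_self 1 (div_pos hw_pos (mul_pos (neg_pos.2 hα) hγ))

lemma perturbationKernel_convolution (hα : α < 0) (hγ : 0 < γ) (hw : Summable w)
    (hφ : ContinuousBoundedBy φ C) :
    perturbationKernel w r α γ ⋆ φ = greenKernel α γ ⋆ ((-α * γ) • φ - delaySum w r φ) := by
  have hH := integrable_greenKernel hα hγ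
  rw [perturbationKernel, sub_convolution (hH.smul _) (integrable_delaySum hw hH) hφ,
    delaySum_convolution hw hH hφ, convolution_sub hH (hφ.const_smul _) (hφ.delaySum hw),
    convolution_delaySum hw hH hφ, smul_convolution, convolution_smul]

lemma isBoundedC2_solution_iff_fixedPoint (hα : α < 0) (hγ : 0 < γ) (hw : Summable w)
    (hf : ContinuousBoundedBy f C) {D : ℝ} (hψ : ContinuousBoundedBy ψ D) :
    (IsBoundedC2 ψ ∧
      ∀ t, deriv (deriv ψ) t - (α + γ) * deriv ψ t - delaySum w r ψ t = f t) ↔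
      ψ = -(greenKernel α γ ⋆ f) + perturbationKernel w r α γ ⋆ ψ := by
  have hsource := (hψ.const_smul (-α * γ)).sub (hψ.delaySum (r := r) hw)
  rw [perturbationKernel_convolution hα hγ hw hψ, neg_add_eq_sub,
    ← convolution_sub (integrable_greenKernel hα hγ) hsource hf,
    ← isBoundedC2_and_second_order_iff hα hγ (hsource.sub hf)]
  refine and_congr_right fun _ => forall_congr' fun t => ?_
  simp only [Pi.sub_apply, Pi.smul_apply, smul_eq_mul]
  constructor <;> intro h <;> linear_combination h

lemma integrable_inverseKernel (hα : α < 0) (hγ : 0 < γ) (hw : Summable w)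
    (hm : ∫ t, |perturbationKernel w r α γ t| < 1) : Integrable (inverseKernel w r α γ) :=
  have hH := integrable_greenKernel hα hγ
  have hρ := integrable_resolventKernel (integrable_perturbationKernel hα hγ hw) hm
  (hH.add (hρ.integrable_convolution _ hH)).neg

lemma continuous_inverseKernel (hα : α < 0) (hγ : 0 < γ) (hw : Summable w)
    (hm : ∫ t, |perturbationKernel w r α γ t| < 1) : Continuous (inverseKernel w r α γ) :=
  have hH := continuousBoundedBy_greenKernel hα.le hγ.le
  (hH.add (hH.convolution
    (integrable_resolventKernel (integrable_perturbationKernel hα hγ hw) hm))).neg.continuous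

lemma inverseKernel_convolution (hα : α < 0) (hγ : 0 < γ) (hw : Summable w)
    (hm : ∫ t, |perturbationKernel w r α γ t| < 1) (hf : ContinuousBoundedBy f C) :
    inverseKernel w r α γ ⋆ f = -(greenKernel α γ ⋆ f) +
      resolventKernel (perturbationKernel w r α γ) ⋆ -(greenKernel α γ ⋆ f) := by
  have hH := integrable_greenKernel hα hγ
  have hρ := integrable_resolventKernel (integrable_perturbationKernel hα hγ hw) hm
  rw [inverseKernel, neg_convolution, (hf.convolutionExists hH).add_distrib
      (hf.convolutionExists (hρ.integrable_convolution _ hH)),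
    convolution_assoc_real hρ hH (continuousBoundedBy_greenKernel hα.le hγ.le) hf,
    convolution_neg, neg_add]

lemma fixedPoint_iff_eq_inverseKernel_convolution (hα : α < 0) (hγ : 0 < γ) (hw : Summable w)
    (hm : ∫ t, |perturbationKernel w r α γ t| < 1) (hf : ContinuousBoundedBy f C) {D : ℝ}
    (hψ : ContinuousBoundedBy ψ D) :
    ψ = -(greenKernel α γ ⋆ f) + perturbationKernel w r α γ ⋆ ψ ↔
      ψ = inverseKernel w r α γ ⋆ f := by
  have hp := integrable_perturbationKernel (r := r) hα hγ hw
  obtain ⟨E, hpE⟩ := exists_continuousBoundedBy_perturbationKernel (r := r) hα hγ hw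
  have hHf := (hf.convolution (integrable_greenKernel hα hγ)).neg
  rw [inverseKernel_convolution hα hγ hw hm hf]
  exact eq_add_convolution_iff_of_resolvent hp hpE (integrable_resolventKernel hp hm)
    (hpE.resolventKernel hp hm) (resolventKernel_eq hpE hp hm) hHf hψ

lemma isBoundedC2_solution_iff (hα : α < 0) (hγ : 0 < γ) (hw : Summable w)
    (hm : ∫ t, |perturbationKernel w r α γ t| < 1) (hf : ContinuousBoundedBy f C) :
    (IsBoundedC2 ψ ∧
      ∀ t, deriv (deriv ψ) t - (α + γ) * deriv ψ t - delaySum w r ψ t = f t) ↔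
      ψ = inverseKernel w r α γ ⋆ f := by
  constructor <;> intro h
  · obtain ⟨D, hψ⟩ := h.1.exists_continuousBoundedBy
    exact (fixedPoint_iff_eq_inverseKernel_convolution hα hγ hw hm hf hψ).1
      ((isBoundedC2_solution_iff_fixedPoint hα hγ hw hf hψ).1 h)
  · have hψ := hf.convolution (integrable_inverseKernel (r := r) hα hγ hw hm)
    rw [← h] at hψ
    exact (isBoundedC2_solution_iff_fixedPoint hα hγ hw hf hψ).2
      ((fixedPoint_iff_eq_inverseKernel_convolution hα hγ hw hm hf hψ).2 h)

end Inversion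

section CharacteristicFunction

variable {b c τ α : ℝ}

lemma mul_exp_lt_one_of_chi1_eq_zero (hc : 0 ≤ c) (hα : α < 0) (h : chi1 b c τ α = 0) :
    b * Real.exp (-(α * c * τ)) < 1 := by
  by_contra! hle
  have hquot : Real.exp (-(α * c * τ)) / (1 - b * Real.exp (-(α * c * τ))) ≤ 0 :=
    div_nonpos_of_nonneg_of_nonpos (Real.exp_pos _).le (sub_nonpos.2 hle)
  rw [chi1] at h
  linarith [pow_pos (neg_pos.2 hα) 2, neg_sq α, mul_nonpos_of_nonneg_of_nonpos hc hα.le]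

lemma hasSum_of_chi1_eq_zero (hb : 0 ≤ b) (hc : 0 ≤ c) (hα : α < 0) (h : chi1 b c τ α = 0) :
    HasSum (fun j : ℕ => b ^ j * Real.exp (-(α * (((j : ℝ) + 1) * c * τ)))) (α ^ 2 - c * α) := by
  have hgeom := (hasSum_geometric_of_lt_one (mul_nonneg hb (Real.exp_pos _).le)
    (mul_exp_lt_one_of_chi1_eq_zero hc hα h)).mul_left (Real.exp (-(α * c * τ)))
  rw [← div_eq_mul_inv, ← sub_eq_zero.1 h] at hgeom
  refine hgeom.congr_fun fun j => ?_
  rw [show -(α * (((j : ℝ) + 1) * c * τ)) = j * -(α * c * τ) + -(α * c * τ) by ring,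
    Real.exp_add, Real.exp_nat_mul, mul_pow]
  ring

end CharacteristicFunction

theorem inverse_kernel_exists_general {ι : Type*} [Countable ι] {w r : ι → ℝ} {c α : ℝ}
    (hw : ∀ j, 0 ≤ w j) (hpos : ∃ j, 0 < w j) (hr : ∀ j, 0 ≤ r j) (hα : α < 0)
    (hsum : Summable fun j => w j * Real.exp (-(α * r j)))
    (hle : ∑' j, w j * Real.exp (-(α * r j)) ≤ α ^ 2 - c * α) :
    ∃ N : ℝ → ℝ, Continuous N ∧ (∀ t, N t < 0) ∧ Integrable N ∧
      ∀ f : ℝ → ℝ, Continuous f → (∃ C : ℝ, ∀ t, |f t| ≤ C) →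
        (∀ t : ℝ, Integrable fun s => N (t - s) * f s) ∧
        (let φ : ℝ → ℝ := fun t => ∫ s : ℝ, N (t - s) * f s
         ContDiff ℝ 2 φ ∧
         (∃ C : ℝ, ∀ t, |φ t| ≤ C ∧ |deriv φ t| ≤ C ∧ |deriv (deriv φ) t| ≤ C) ∧
         (∀ t : ℝ, deriv (deriv φ) t - c * deriv φ t - delaySum w r φ t = f t) ∧
         ∀ ψ : ℝ → ℝ, ContDiff ℝ 2 ψ →
           (∃ C : ℝ, ∀ t, |ψ t| ≤ C ∧ |deriv ψ t| ≤ C ∧ |deriv (deriv ψ) t| ≤ C) →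
           (∀ t : ℝ, deriv (deriv ψ) t - c * deriv ψ t - delaySum w r ψ t = f t) →
           ψ = φ) := by
  obtain ⟨γ, rfl⟩ : ∃ γ, c = α + γ := ⟨c - α, by ring⟩
  rw [show α ^ 2 - (α + γ) * α = -α * γ by ring] at hle
  have one_le_exp (j : ι) : 1 ≤ Real.exp (-(α * r j)) :=
    Real.one_le_exp (neg_nonneg.2 (mul_nonpos_of_nonpos_of_nonneg hα.le (hr j)))
  have hws : Summable w :=
    hsum.of_nonneg_of_le hw fun j => le_mul_of_one_le_right (hw j) (one_le_exp j)
  have hw_pos : 0 < ∑' j, w j := hpos.elim fun j hj => hws.tsum_pos hw j hj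
  have hγ : 0 < γ := by
    refine pos_of_mul_pos_right (hw_pos.trans_le (le_trans ?_ hle)) (neg_pos.2 hα).le
    exact hws.tsum_le_tsum (fun j => le_mul_of_one_le_right (hw j) (one_le_exp j)) hsum
  have hp := perturbationKernel_nonneg hα hγ hw hr hsum hle
  have hm := integral_abs_perturbationKernel_lt_one hα hγ hws hw_pos hp
  refine ⟨inverseKernel w r α γ, continuous_inverseKernel hα hγ hws hm,
    inverseKernel_neg (hα.trans hγ) hp, integrable_inverseKernel hα hγ hws hm,
    fun f hf ⟨C, hC⟩ => ⟨fun t => ContinuousBoundedBy.integrable_mul ⟨hf, hC⟩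
      ((integrable_inverseKernel hα hγ hws hm).comp_sub_left t), ?_⟩⟩
  intro φ
  have hφ : φ = inverseKernel w r α γ ⋆ f := funext fun t =>
    (convolution_lsmul_swap (f := inverseKernel w r α γ)).symm
  have hiff (ψ : ℝ → ℝ) := isBoundedC2_solution_iff (ψ := ψ) hα hγ hws hm ⟨hf, hC⟩
  obtain ⟨⟨hφ₂, hφ_bound⟩, hφ_eq⟩ := (hiff φ).2 hφ
  exact ⟨hφ₂, hφ_bound, hφ_eq, fun ψ hψ₂ hψ_bound hψ_eq =>
    ((hiff ψ).1 ⟨⟨hψ₂, hψ_bound⟩, hψ_eq⟩).trans hφ.symm⟩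

/-- For `(τ,c) ∈ 𝔇` the operator `𝒟φ = φ'' − cφ' − SBφ` has an inverse
integral operator with a continuous, strictly negative, integrable kernel `N`: for every
bounded continuous `f`, `φ(t) = ∫_ℝ N(t−s) f(s) ds` is the unique bounded `C²` solution
(with bounded derivatives) of `φ'' − cφ' − SBφ = f`. -/
theorem inverse_kernel_exists (b c τ : ℝ) (hb : b ∈ Set.Ioo (0 : ℝ) 1)
    (hτ : 0 < τ) (hc : 0 < c) (hD : inD b τ c) :
    ∃ N : ℝ → ℝ, Continuous N ∧ (∀ t, N t < 0) ∧ Integrable N ∧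
      ∀ f : ℝ → ℝ, Continuous f → (∃ C : ℝ, ∀ t, |f t| ≤ C) →
        (∀ t : ℝ, Integrable fun s => N (t - s) * f s) ∧
        (let φ : ℝ → ℝ := fun t => ∫ s : ℝ, N (t - s) * f s
         ContDiff ℝ 2 φ ∧
         (∃ C : ℝ, ∀ t, |φ t| ≤ C ∧ |deriv φ t| ≤ C ∧ |deriv (deriv φ) t| ≤ C) ∧
         (∀ t : ℝ, deriv (deriv φ) t - c * deriv φ t - SBop b c τ φ t = f t) ∧
         ∀ ψ : ℝ → ℝ, ContDiff ℝ 2 ψ →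
           (∃ C : ℝ, ∀ t, |ψ t| ≤ C ∧ |deriv ψ t| ≤ C ∧ |deriv (deriv ψ) t| ≤ C) →
           (∀ t : ℝ, deriv (deriv ψ) t - c * deriv ψ t - SBop b c τ ψ t = f t) →
           ψ = φ) := by
  obtain ⟨-, α, hα, hroot⟩ := hD
  have hsum := hasSum_of_chi1_eq_zero hb.1.le hc.le hα hroot
  exact inverse_kernel_exists_general (fun j => pow_nonneg hb.1.le j) ⟨0, pow_pos hb.1 0⟩
    (fun j => by positivity) hα hsum.summable hsum.tsum_eq.le
end
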